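/- Every τ-tilting-finite commutative ladder over an algebraically closed field K is representation-finite. -/

import Mathlib

/- Formalization of statements from
   "Report on the finiteness of silting objects"
   by T. Aihara, T. Honma, K. Miyamoto, Q. Wang. -/

open CategoryTheory CategoryTheory.Limits

universe u v w

noncomputable section
namespace PaperSilting
/-! ### Module-theoretic notions.

We model right `Λ`-modules as left modules over the opposite ring; all the
definitions below are stated for left modules over a ring `R` and are applied
with `R := Λᵐᵒᵖ`. -/

/-- The category of `R`-modules (in `Type 0`). -/
abbrev ModCat (R : Type) [Ring R] := ModuleCat.{0} R

variable {R : Type} [Ring R]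

/-- The module object `M` is finitely generated. -/
def IsFGMod {R : Type} [Ring R] (M : ModCat R) : Prop := Module.Finite R M

/-- Indecomposable module object. -/
def IsIndecMod {R : Type} [Ring R] (M : ModCat R) : Prop :=
  ¬ IsZero M ∧ ∀ A B : ModCat R, Nonempty (M ≅ A ⊞ B) → IsZero A ∨ IsZero B

/-- `N` belongs to `add M`, i.e. `N` is a direct summand of a finite direct sum
of copies of `M`. -/
def MemAddMod {R : Type} [Ring R] (N M : ModCat R) : Prop :=
  ∃ (k : ℕ) (g : N ⟶ ⨁ (fun _ : Fin k => M)) (h : (⨁ (fun _ : Fin k => M)) ⟶ N),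
    g ≫ h = 𝟙 N

/-- A basic module: it has no direct summand of the form `N ⊕ N` with `N ≠ 0`. -/
def IsBasicMod {R : Type} [Ring R] (M : ModCat R) : Prop :=
  ∀ N X : ModCat R, Nonempty (M ≅ (N ⊞ N) ⊞ X) → IsZero N

/-- `M` is τ-rigid, i.e. `Hom(M, τM) = 0`: there is a projective presentation
`P₁ → P₀ → M → 0` by finitely generated projectives such that
`Hom(P₀, M) → Hom(P₁, M)` is surjective (Adachi–Iyama–Reiten). -/
def IsTauRigidMod {R : Type} [Ring R] (M : ModCat R) : Prop :=
  ∃ (P₁ P₀ : ModCat R) (f : P₁ ⟶ P₀) (g : P₀ ⟶ M),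
    Projective P₁ ∧ Projective P₀ ∧ IsFGMod P₁ ∧ IsFGMod P₀ ∧
    Function.Surjective g ∧ Function.Exact f g ∧
    ∀ h : P₁ ⟶ M, ∃ k : P₀ ⟶ M, f ≫ k = h

/-- A τ-rigid pair `(M, P)`: `M` is a τ-rigid module and `P` is a finitely
generated projective with `Hom(P, M) = 0`. -/
def IsTauRigidPairMod {R : Type} [Ring R] (M P : ModCat R) : Prop :=
  IsFGMod M ∧ IsTauRigidMod M ∧ IsFGMod P ∧ Projective P ∧ ∀ f : P ⟶ M, f = 0

/-- `M` is a support τ-tilting module: `(M, P)` is a maximal τ-rigid pair for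
some projective `P` (Adachi–Iyama–Reiten; equivalently, `M` is the `0`-th
cohomology of a two-term silting complex in `K^b(proj)`). -/
def IsSupportTauTiltingMod {R : Type} [Ring R] (M : ModCat R) : Prop :=
  ∃ P : ModCat R, IsTauRigidPairMod M P ∧
    ∀ N Q : ModCat R, IsTauRigidPairMod (M ⊞ N) (P ⊞ Q) → MemAddMod N M ∧ MemAddMod Q P

/-- The ring `R` admits only finitely many basic support τ-tilting modules up
to isomorphism. -/
def IsTauTiltingFiniteRing (R : Type) [Ring R] : Prop :=
  ∃ (n : ℕ) (f : Fin n → ModCat R),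
    ∀ M : ModCat R, IsSupportTauTiltingMod M → IsBasicMod M → ∃ i, Nonempty (M ≅ f i)

/-- The ring `R` admits only finitely many finitely generated indecomposable
modules up to isomorphism. -/
def IsRepFiniteRing (R : Type) [Ring R] : Prop :=
  ∃ (n : ℕ) (f : Fin n → ModCat R),
    ∀ M : ModCat R, IsFGMod M → IsIndecMod M → ∃ i, Nonempty (M ≅ f i)

/-- `R` has exactly `n` isomorphism classes of basic support τ-tilting modules. -/
def SupportTauTiltingCount (R : Type) [Ring R] (n : ℕ) : Prop :=
  ∃ f : Fin n → ModCat R,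
    (∀ i, IsSupportTauTiltingMod (f i) ∧ IsBasicMod (f i)) ∧
    (∀ i j, Nonempty (f i ≅ f j) → i = j) ∧
    (∀ M : ModCat R, IsSupportTauTiltingMod M → IsBasicMod M → ∃ i, Nonempty (M ≅ f i))

/-- An algebra `Λ` is τ-tilting-finite (with respect to right modules,
i.e. left `Λᵐᵒᵖ`-modules). -/
def IsTauTiltingFinite (Λ : Type) [Ring Λ] : Prop := IsTauTiltingFiniteRing Λᵐᵒᵖ

/-- An algebra `Λ` is representation-finite (with respect to right modules). -/
def IsRepFinite (Λ : Type) [Ring Λ] : Prop := IsRepFiniteRing Λᵐᵒᵖ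
/-! ### Commutative ladders. -/

/-- The commutative ladder of degree `n` is the incidence algebra of the poset
`Fin 2 × Fin n` (the path algebra of the ladder quiver with two rows of `n`
vertices, bound by all commutativity relations), realized as the subalgebra of
the matrix algebra consisting of matrices supported on pairs `p ≤ q`. -/
def ladderSubalgebra (K : Type) [Field K] (n : ℕ) :
    Subalgebra K (Matrix (Fin 2 × Fin n) (Fin 2 × Fin n) K) where
  carrier := {A | ∀ p q : Fin 2 × Fin n, ¬ p ≤ q → A p q = 0}
  add_mem' := by
    intro A B hA hB p q hpq
    simp [Matrix.add_apply, hA p q hpq, hB p q hpq]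
  zero_mem' := by intro p q _; simp
  mul_mem' := by
    intro A B hA hB p q hpq
    show ∑ z, A p z * B z q = 0
    refine Finset.sum_eq_zero fun z _ => ?_
    by_cases h1 : p ≤ z
    · by_cases h2 : z ≤ q
      · exact absurd (le_trans h1 h2) hpq
      · rw [hB z q h2, mul_zero]
    · rw [hA p z h1, zero_mul]
  one_mem' := by
    intro p q hpq
    have : p ≠ q := fun h => hpq (h ▸ le_refl p)
    simp [Matrix.one_apply_ne this]
  algebraMap_mem' := by
    intro k p q hpq
    have : p ≠ q := fun h => hpq (h ▸ le_refl p)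
    simp [Matrix.algebraMap_matrix_apply, this]

/-- The commutative ladder of degree `n` over `K`. -/
def CommLadder (K : Type) [Field K] (n : ℕ) : Type := ladderSubalgebra K n

instance (K : Type) [Field K] (n : ℕ) : Ring (CommLadder K n) :=
  inferInstanceAs (Ring (ladderSubalgebra K n))

instance (K : Type) [Field K] (n : ℕ) : Algebra K (CommLadder K n) :=
  inferInstanceAs (Algebra K (ladderSubalgebra K n))

/-! Let `Λ` be the commutative ladder of degree `n`.

If `n ≤ 4`, then `Λ` is representation-finite. It is enough to treat `n = 4`, as representations of
a smaller ladder extend by zero. Replacing the space at a sink by the kernel of the sum of the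
incoming maps is a fully faithful functor from the representations for which this sum is surjective
to the representations of another quiver with relations; the only indecomposable representation
that it misses is the simple one at the sink. A path of such reflections leads from the ladder to
a tree of type `E₈`, and the sinks of the tree can be reflected in turn until the tree reappears.
On dimension vectors this cycle acts by the Coxeter transformation `c`. Since `c ^ 15 = -1`, going
through the cycle 15 times turns every dimension vector into a negative one. Hence every
indecomposable representation is one of the simples met on the way, up to fully faithful functors.

If `n ≥ 5`, then `Λ` has bricks `X` of arbitrarily large dimension with projective dimension at most
one and `Ext¹(X, X) = 0`. By Bongartz's completion, each of them is a direct summand of a tilting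
module, which is a support τ-tilting module. Since every nonzero endomorphism of `X` is injective,
`X` embeds into an indecomposable summand of it, which bounds its dimension if the support τ-tilting
modules are finite in number. The bricks are the quotients of two filtrations `S₁ ≤ S₀` of a vector
space `U × U × V` indexed by the vertices of the ladder, whose relative position encodes a brick
`U ⇉ V` of the Kronecker quiver.
-/

section FiniteUpToIso

variable {C D : Type*} [Category* C] [Category* D] {P Q : C → Prop}

/-- The objects satisfying `P` fall into finitely many isomorphism classes. -/
def FiniteUpToIso (P : C → Prop) : Prop :=
  {c : Quotient (isIsomorphicSetoid C) | ∃ X, P X ∧ ⟦X⟧ = c}.Finite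

lemma FiniteUpToIso.mono (hQ : FiniteUpToIso Q) (h : ∀ X, P X → Q X) : FiniteUpToIso P :=
  hQ.subset fun _ ⟨X, hX, hc⟩ ↦ ⟨X, h X hX, hc⟩

lemma FiniteUpToIso.or (hP : FiniteUpToIso P) (hQ : FiniteUpToIso Q) :
    FiniteUpToIso fun X ↦ P X ∨ Q X :=
  (hP.union hQ).subset fun _ ⟨X, hX, hc⟩ ↦ hX.imp (fun h ↦ ⟨X, h, hc⟩) fun h ↦ ⟨X, h, hc⟩

lemma finiteUpToIso_of_forall_not (h : ∀ X, ¬ P X) : FiniteUpToIso P :=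
  Set.finite_empty.subset fun _ ⟨X, hX, _⟩ ↦ h X hX

lemma finiteUpToIso_of_forall_iso (h : ∀ X Y, P X → P Y → Nonempty (X ≅ Y)) :
    FiniteUpToIso P :=
  Set.Subsingleton.finite fun _ ⟨X, hX, hc⟩ _ ⟨Y, hY, hd⟩ ↦
    hc ▸ hd ▸ Quotient.sound (h X Y hX hY)

lemma FiniteUpToIso.of_reflects_iso {P' : D → Prop} (hP' : FiniteUpToIso P')
    (φ : ∀ X, P X → D) (hφ : ∀ X hX, P' (φ X hX))
    (reflects : ∀ X Y hX hY, Nonempty (φ X hX ≅ φ Y hY) → Nonempty (X ≅ Y)) :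
    FiniteUpToIso P := by
  have := hP'.to_subtype
  choose X hX hc using fun c : {c : Quotient (isIsomorphicSetoid C) | ∃ X, P X ∧ ⟦X⟧ = c} => c.2
  have := Finite.of_injective (fun c ↦ (⟨_, _, hφ (X c) (hX c), rfl⟩ :
    {c : Quotient (isIsomorphicSetoid D) | ∃ Y, P' Y ∧ ⟦Y⟧ = c})) fun c d h ↦ by
      rw [Subtype.ext_iff, ← hc c, ← hc d]
      exact Quotient.sound (reflects _ _ _ _ (Quotient.exact (congrArg Subtype.val h)))
  exact Set.toFinite _

lemma finiteUpToIso_iff :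
    FiniteUpToIso P ↔ ∃ (n : ℕ) (f : Fin n → C), ∀ X, P X → ∃ i, Nonempty (X ≅ f i) := by
  constructor
  · intro hP
    obtain ⟨n, f, -, hf⟩ := hP.fin_param
    refine ⟨n, fun i ↦ (f i).out, fun X hX ↦ ?_⟩
    obtain ⟨i, hi⟩ := hf.ge ⟨X, hX, rfl⟩
    exact ⟨i, Quotient.exact (hi.symm.trans (f i).out_eq.symm)⟩
  · rintro ⟨n, f, hf⟩
    refine (Set.finite_range fun i ↦ (⟦f i⟧ : Quotient (isIsomorphicSetoid C))).subset ?_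
    rintro _ ⟨X, hX, rfl⟩
    obtain ⟨i, hi⟩ := hf X hX
    exact ⟨i, (Quotient.sound hi).symm⟩

end FiniteUpToIso

section IsIndec

variable {C D : Type*} [Category* C] [Category* D] [HasZeroMorphisms C] [HasZeroMorphisms D]

/-- An indecomposable object, defined through its idempotent endomorphisms so that no biproducts
are needed. -/
def IsIndec (X : C) : Prop :=
  𝟙 X ≠ 0 ∧ ∀ e : X ⟶ X, e ≫ e = e → e = 0 ∨ e = 𝟙 X

lemma IsIndec.map (F : C ⥤ D) [F.PreservesZeroMorphisms] [F.Full] [F.Faithful] {X : C}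
    (hX : IsIndec X) : IsIndec (F.obj X) := by
  refine ⟨fun h ↦ hX.1 (F.map_injective (by simpa using h)), fun e he ↦ ?_⟩
  obtain ⟨e, rfl⟩ := F.map_surjective e
  rw [← F.map_comp] at he
  exact (hX.2 e (F.map_injective he)).imp (by rintro rfl; simp) (by rintro rfl; simp)

lemma IsIndec.of_map (F : C ⥤ D) [F.PreservesZeroMorphisms] [F.Faithful] {X : C}
    (hX : IsIndec (F.obj X)) : IsIndec X := by
  refine ⟨fun h ↦ hX.1 (by rw [← F.map_id, h, F.map_zero]), fun e he ↦ ?_⟩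
  refine (hX.2 (F.map e) (by rw [← F.map_comp, he])).imp (fun h ↦ ?_) fun h ↦ ?_
  · exact F.map_injective (h.trans (F.map_zero X X).symm)
  · exact F.map_injective (h.trans (F.map_id X).symm)

end IsIndec

/-! ### Representations and reflections at sinks -/

/-- A finite-dimensional representation of the relation `r` on `ι`: a module over the algebra with
basis `e i j` for `r i j` and product `e i j * e j k = e i k` if `r i k`, and `0` otherwise. For a
partial order this is the incidence algebra, but `r` need not be transitive. -/
structure Rep (K : Type u) [Field K] {ι : Type} (r : ι → ι → Bool) where
  V : ι → Type v
  [addCommGroup : ∀ i, AddCommGroup (V i)]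
  [module : ∀ i, Module K (V i)]
  [finite : ∀ i, Module.Finite K (V i)]
  map : ∀ i j, V i →ₗ[K] V j
  map_self : ∀ i v, map i i v = v
  map_map : ∀ i j k, r i j → r j k → ∀ v, map j k (map i j v) = map i k v
  map_eq_zero : ∀ i j, ¬ r i j → ∀ v, map i j v = 0

namespace Rep

attribute [instance] addCommGroup module finite

variable {K : Type u} [Field K] {ι : Type} {r : ι → ι → Bool}

/-- A morphism of representations. -/
@[ext]
structure Hom (M N : Rep.{u, v} K r) where
  app : ∀ i, M.V i →ₗ[K] N.V i
  naturality : ∀ i j v, app j (M.map i j v) = N.map i j (app i v)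

instance : Category (Rep.{u, v} K r) where
  Hom := Hom
  id M := ⟨fun _ ↦ LinearMap.id, fun _ _ _ ↦ rfl⟩
  comp f g := ⟨fun i ↦ g.app i ∘ₗ f.app i, fun i j v ↦ by simp [f.naturality, g.naturality]⟩

variable {M N : Rep.{u, v} K r}

@[ext]
lemma hom_ext {f g : M ⟶ N} (h : ∀ i v, f.app i v = g.app i v) : f = g :=
  Hom.ext (funext fun i ↦ LinearMap.ext (h i))

@[simp]
lemma id_app (i : ι) (v : M.V i) : (𝟙 M : M ⟶ M).app i v = v := rfl

@[simp]
lemma comp_app {L : Rep.{u, v} K r} (f : M ⟶ N) (g : N ⟶ L) (i : ι) (v : M.V i) :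
    (f ≫ g).app i v = g.app i (f.app i v) := rfl

instance : HasZeroMorphisms (Rep.{u, v} K r) where
  zero M N := ⟨⟨fun _ ↦ 0, by simp⟩⟩
  comp_zero _ _ := rfl
  zero_comp _ _ _ f := hom_ext fun i _ ↦ (f.app i).map_zero

/-- The dimension vector. -/
def dim (M : Rep.{u, v} K r) (i : ι) : ℤ := Module.finrank K (M.V i)

lemma dim_nonneg (M : Rep.{u, v} K r) : 0 ≤ M.dim := fun _ ↦ Int.natCast_nonneg _

lemma exists_dim_ne_zero (hM : IsIndec M) : ∃ i, M.dim i ≠ 0 := by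
  by_contra! h
  refine hM.1 (hom_ext fun i v ↦ ?_)
  have := Module.finrank_zero_iff.1 (Int.natCast_eq_zero.1 (h i))
  exact Subsingleton.elim _ _

end Rep

lemma exists_comp_eq_of_ker_le {R A B C : Type*} [Ring R] [AddCommGroup A] [AddCommGroup B]
    [AddCommGroup C] [Module R A] [Module R B] [Module R C] {f : A →ₗ[R] B}
    (hf : Function.Surjective f) {g : A →ₗ[R] C} (h : LinearMap.ker f ≤ LinearMap.ker g) :
    ∃ k : B →ₗ[R] C, ∀ a, k (f a) = g a :=
  ⟨(LinearMap.ker f).liftQ g h ∘ₗ (f.quotKerEquivOfSurjective hf).symm, fun a ↦ by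
    rw [LinearMap.comp_apply, LinearEquiv.coe_coe, ← f.quotKerEquivOfSurjective_apply_mk hf,
      LinearEquiv.symm_apply_apply, Submodule.liftQ_apply]⟩

namespace Rep

section Reflection

variable {α : Type} [Fintype α] [DecidableEq α]

/-- The immediate predecessors of the vertex `none`. -/
def preds (r : Option α → Option α → Bool) : Finset α :=
  {l | r (some l) none ∧ ∀ m, r (some l) (some m) → r (some m) none → m = l}

/-- The relation carried by the reflection at the sink `none`. The space `Hom(some i, none)` of the
new algebra is the kernel of a map from a space of dimension `#{l ∈ preds r | r i l}` onto the old
one, whence the second clause. -/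
def reflectRel (r : Option α → Option α → Bool) : Option α → Option α → Bool
  | none, none => true
  | none, some k => decide (∃ l ∈ preds r, r (some l) (some k))
  | some i, none =>
    Finset.card {l ∈ preds r | r (some i) (some l)} ≠ if r (some i) none then 1 else 0
  | some i, some k => r (some i) (some k)

/-- The vertex `none` is a sink, and for every representation `M` of `r` the kernel of
`∑ l, s l • M.map l none` on `∏ l ∈ preds r, M.V l` extends the remaining spaces of `M` to a
representation of `reflectRel r`. -/
structure Reflectable (r : Option α → Option α → Bool) (s : α → ℤˣ) : Prop where
  sink : ∀ k, ¬ r none (some k)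
  factor : ∀ i, r (some i) none → ∃ l ∈ preds r, r (some i) (some l)
  sum_sign : ∀ i, reflectRel r (some i) none → r (some i) none →
    ∑ l ∈ preds r with r (some i) (some l), (s l : ℤ) = 0
  out : ∀ l ∈ preds r, ∀ j k, r (some l) (some k) → r (some j) (some k) →
    reflectRel r none (some j) → r (some l) (some j)
  inn : ∀ l ∈ preds r, ∀ i j, r (some i) (some j) → r (some i) (some l) →
    reflectRel r (some j) none → (r (some j) (some l) ↔ reflectRel r (some i) none)
  through : ∀ i k, reflectRel r (some i) none → reflectRel r none (some k) →
    r (some i) (some k) → Finset.card {l ∈ preds r | r (some i) (some l) ∧ r (some l) (some k)} = 1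
  no_cycle : ∀ j, ¬ (reflectRel r none (some j) ∧ reflectRel r (some j) none)

set_option synthInstance.maxSize 1000 in
instance (r : Option α → Option α → Bool) (s : α → ℤˣ) : Decidable (Reflectable r s) :=
  decidable_of_iff (_ ∧ _ ∧ _ ∧ _ ∧ _ ∧ _ ∧ _)
    ⟨fun ⟨h₁, h₂, h₃, h₄, h₅, h₆, h₇⟩ ↦ ⟨h₁, h₂, h₃, h₄, h₅, h₆, h₇⟩,
      fun ⟨h₁, h₂, h₃, h₄, h₅, h₆, h₇⟩ ↦ ⟨h₁, h₂, h₃, h₄, h₅, h₆, h₇⟩⟩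

variable {K : Type u} [Field K] {r : Option α → Option α → Bool} {s : α → ℤˣ}

/-- The signed sum of the maps into the sink. -/
def intoSink (s : α → ℤˣ) (M : Rep.{u, v} K r) :
    (∀ l : preds r, M.V (some l)) →ₗ[K] M.V none :=
  ∑ l : preds r, (s l : ℤ) • M.map (some l) none ∘ₗ LinearMap.proj l

lemma intoSink_apply (M : Rep.{u, v} K r) (v : ∀ l : preds r, M.V (some l)) :
    M.intoSink s v = ∑ l : preds r, (s l : ℤ) • M.map (some l) none (v l) := by
  simp [intoSink]

lemma intoSink_single (M : Rep.{u, v} K r) (l : preds r) (v : M.V (some l)) :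
    M.intoSink s (Pi.single l v) = (s l : ℤ) • M.map (some l) none v := by
  rw [intoSink_apply, Fintype.sum_eq_single l fun m hm ↦ by simp [hm], Pi.single_eq_same]

lemma rel_none_of_mem_preds {l : α} (hl : l ∈ preds r) : r (some l) none :=
  (Finset.mem_filter.1 hl).2.1

lemma eq_of_mem_preds {l m : α} (hl : l ∈ preds r) (hlm : r (some l) (some m))
    (hm : r (some m) none) : m = l :=
  (Finset.mem_filter.1 hl).2.2 m hlm hm

lemma map_none_mem_range_intoSink (h : Reflectable r s) (M : Rep.{u, v} K r) (i : α)
    (v : M.V (some i)) : M.map (some i) none v ∈ LinearMap.range (M.intoSink s) := by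
  by_cases hi : r (some i) none
  · obtain ⟨l, hl, hil⟩ := h.factor i hi
    refine ⟨Pi.single ⟨l, hl⟩ ((s l : ℤ) • M.map (some i) (some l) v), ?_⟩
    rw [intoSink_single, map_zsmul, smul_smul, M.map_map _ _ _ hil (rel_none_of_mem_preds hl)]
    simp
  · simp [M.map_eq_zero _ _ hi]

lemma intoSink_map_eq_zero (h : Reflectable r s) (M : Rep.{u, v} K r) {i : α}
    (hi : reflectRel r (some i) none) (v : M.V (some i)) :
    M.intoSink s (fun l ↦ M.map (some i) (some l) v) = 0 := by
  by_cases hin : r (some i) none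
  · have key (l : preds r) : (s l : ℤ) • M.map (some l) none (M.map (some i) (some l) v) =
        if r (some i) (some l) then (s l : ℤ) • M.map (some i) none v else 0 := by
      split_ifs with hil
      · rw [M.map_map _ _ _ hil (rel_none_of_mem_preds l.2)]
      · simp [M.map_eq_zero _ _ hil]
    rw [intoSink_apply, Fintype.sum_congr _ _ key,
      Finset.sum_coe_sort (preds r)
        fun l ↦ if r (some i) (some l) then (s l : ℤ) • M.map (some i) none v else 0,
      ← Finset.sum_filter, ← Finset.sum_smul, h.sum_sign i hi hin, zero_smul]
  · rw [intoSink_apply]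
    refine Finset.sum_eq_zero fun l _ ↦ ?_
    by_cases hil : r (some i) (some l)
    · rw [M.map_map _ _ _ hil (rel_none_of_mem_preds l.2), M.map_eq_zero _ _ hin, smul_zero]
    · rw [M.map_eq_zero _ _ hil, map_zero, smul_zero]

lemma map_sum_preds (h : Reflectable r s) (M : Rep.{u, v} K r) {j k : α}
    (hj : reflectRel r none (some j)) (hjk : r (some j) (some k))
    (v : ∀ l : preds r, M.V (some l)) :
    M.map (some j) (some k) (∑ l : preds r, M.map (some l) (some j) (v l)) =
      ∑ l : preds r, M.map (some l) (some k) (v l) := by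
  rw [map_sum]
  refine Finset.sum_congr rfl fun l _ ↦ ?_
  by_cases hlj : r (some l) (some j)
  · exact M.map_map _ _ _ hlj hjk _
  · rw [M.map_eq_zero _ _ hlj, map_zero,
      M.map_eq_zero _ _ fun hlk ↦ hlj (h.out l l.2 j k hlk hjk hj)]

lemma map_map_preds (h : Reflectable r s) (M : Rep.{u, v} K r) {i j : α}
    (hij : r (some i) (some j)) (hj : reflectRel r (some j) none) (v : M.V (some i))
    (l : preds r) :
    M.map (some j) (some l) (M.map (some i) (some j) v) =
      if reflectRel r (some i) none then M.map (some i) (some l) v else 0 := by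
  by_cases hil : r (some i) (some l)
  · have hiff := h.inn l l.2 i j hij hil hj
    split_ifs with hi
    · exact M.map_map _ _ _ hij (hiff.2 hi) v
    · exact M.map_eq_zero _ _ (hi ∘ hiff.1) _
  · rw [M.map_eq_zero _ _ hil, ite_self]
    by_cases hjl : r (some j) (some l)
    · rw [M.map_map _ _ _ hij hjl, M.map_eq_zero _ _ hil]
    · exact M.map_eq_zero _ _ hjl _

lemma sum_preds_map_map (h : Reflectable r s) (M : Rep.{u, v} K r) {i k : α}
    (hi : reflectRel r (some i) none) (hk : reflectRel r none (some k)) (v : M.V (some i)) :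
    ∑ l : preds r, M.map (some l) (some k) (M.map (some i) (some l) v) =
      M.map (some i) (some k) v := by
  have key (l : preds r) : M.map (some l) (some k) (M.map (some i) (some l) v) =
      if r (some i) (some l) ∧ r (some l) (some k) then M.map (some i) (some k) v else 0 := by
    split_ifs with hl
    · exact M.map_map _ _ _ hl.1 hl.2 v
    · by_cases hil : r (some i) (some l)
      · exact M.map_eq_zero _ _ (fun hlk ↦ hl ⟨hil, hlk⟩) _
      · rw [M.map_eq_zero _ _ hil, map_zero]
  rw [Fintype.sum_congr _ _ key,
    Finset.sum_coe_sort (preds r) fun l ↦ if r (some i) (some l) ∧ r (some l) (some k) then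
      M.map (some i) (some k) v else 0, ← Finset.sum_filter, Finset.sum_const]
  by_cases hik : r (some i) (some k)
  · rw [h.through i k hi hk hik, one_smul]
  · rw [M.map_eq_zero _ _ hik, smul_zero]

lemma sum_preds_eq_zero (M : Rep.{u, v} K r) {k : α} (hk : ¬ reflectRel r none (some k))
    (v : ∀ l : preds r, M.V (some l)) : ∑ l : preds r, M.map (some l) (some k) (v l) = 0 :=
  Finset.sum_eq_zero fun l _ ↦ M.map_eq_zero _ _ (fun hlk ↦
    hk (decide_eq_true ⟨l, l.2, hlk⟩)) _

lemma sum_preds_map_self (M : Rep.{u, v} K r) (v : ∀ l : preds r, M.V (some l)) (l : preds r) :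
    ∑ m : preds r, M.map (some m) (some l) (v m) = v l := by
  rw [Fintype.sum_eq_single l fun m hm ↦ M.map_eq_zero _ _ (fun hml ↦ hm ?_) _, M.map_self]
  exact Subtype.ext (eq_of_mem_preds m.2 hml (rel_none_of_mem_preds l.2)).symm

/-- The map from the reflected space at the sink to the space at `k`. -/
def ofKer (s : α → ℤˣ) (M : Rep.{u, v} K r) (k : α) :
    LinearMap.ker (M.intoSink s) →ₗ[K] M.V (some k) :=
  (∑ l : preds r, M.map (some l) (some k) ∘ₗ LinearMap.proj l) ∘ₗ Submodule.subtype _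

@[simp]
lemma ofKer_apply (M : Rep.{u, v} K r) (k : α) (v : LinearMap.ker (M.intoSink s)) :
    M.ofKer s k v = ∑ l : preds r, M.map (some l) (some k) (v.1 l) := by
  simp [ofKer]

/-- The map from the space at `i` to the reflected space at the sink. -/
def toKer (h : Reflectable r s) (M : Rep.{u, v} K r) (i : α) :
    M.V (some i) →ₗ[K] LinearMap.ker (M.intoSink s) :=
  if hi : reflectRel r (some i) none then
    (LinearMap.pi fun l : preds r ↦ M.map (some i) (some l)).codRestrict _
      fun v ↦ intoSink_map_eq_zero h M hi v
  else 0

lemma toKer_apply (h : Reflectable r s) (M : Rep.{u, v} K r) (i : α) (v : M.V (some i))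
    (l : preds r) :
    (M.toKer h i v).1 l =
      if reflectRel r (some i) none then M.map (some i) (some l) v else 0 := by
  unfold toKer
  split_ifs <;> rfl

/-- The reflection of `M` at the sink `none`. -/
def reflect (h : Reflectable r s) (M : Rep.{u, v} K r) : Rep.{u, v} K (reflectRel r) where
  V
    | none => LinearMap.ker (M.intoSink s)
    | some i => M.V (some i)
  addCommGroup
    | none => inferInstance
    | some i => M.addCommGroup (some i)
  module
    | none => inferInstance
    | some i => M.module (some i)
  finite
    | none => inferInstance
    | some i => M.finite (some i)
  map
    | none, none => LinearMap.id
    | none, some k => M.ofKer s k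
    | some i, none => M.toKer h i
    | some i, some k => M.map (some i) (some k)
  map_self
    | none, _ => rfl
    | some i, v => M.map_self (some i) v
  map_map
    | none, none, _, _, _, _ => rfl
    | none, some j, none, hj, hj', _ => absurd ⟨hj, hj'⟩ (h.no_cycle j)
    | none, some j, some k, hj, hjk, v => by
      simpa only [ofKer_apply] using map_sum_preds h M hj hjk v.1
    | some i, none, none, _, _, _ => rfl
    | some i, none, some k, hi, hk, v => by
      simpa only [ofKer_apply, toKer_apply, if_pos hi] using sum_preds_map_map h M hi hk v
    | some i, some j, none, hij, hj, v => Subtype.ext <| funext fun l ↦ by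
      simpa only [toKer_apply, if_pos hj] using map_map_preds h M hij hj v l
    | some i, some j, some k, hij, hjk, v => M.map_map _ _ _ hij hjk v
  map_eq_zero
    | none, none, h₀, _ => absurd rfl h₀
    | none, some k, hk, v => by simpa only [ofKer_apply] using sum_preds_eq_zero M hk v.1
    | some i, none, hi, v => Subtype.ext <| funext fun l ↦ by
      rw [toKer_apply, if_neg hi]; rfl
    | some i, some k, hik, v => M.map_eq_zero _ _ hik v

end Reflection

section ReflectionFunctor

variable {α : Type} [Fintype α] [DecidableEq α] {K : Type u} [Field K]
  {r : Option α → Option α → Bool} {s : α → ℤˣ} {M N : Rep.{u, v} K r}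

lemma intoSink_naturality (f : M ⟶ N) (v : ∀ l : preds r, M.V (some l)) :
    N.intoSink s (fun l ↦ f.app _ (v l)) = f.app none (M.intoSink s v) := by
  simp [intoSink_apply, f.naturality]

/-- The map induced by a morphism on the reflected spaces at the sink. -/
def kerMap (s : α → ℤˣ) (f : M ⟶ N) :
    LinearMap.ker (M.intoSink s) →ₗ[K] LinearMap.ker (N.intoSink s) :=
  (LinearMap.pi fun l : preds r ↦ f.app (some l) ∘ₗ LinearMap.proj l).restrict fun v hv ↦
    (intoSink_naturality f v).trans (by rw [LinearMap.mem_ker.1 hv, map_zero])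

lemma kerMap_apply (f : M ⟶ N) (v : LinearMap.ker (M.intoSink s)) (l : preds r) :
    (kerMap s f v).1 l = f.app (some l) (v.1 l) := rfl

lemma app_ofKer (f : M ⟶ N) (k : α) (v : LinearMap.ker (M.intoSink s)) :
    f.app (some k) (M.ofKer s k v) = N.ofKer s k (kerMap s f v) := by
  simp [kerMap_apply, f.naturality]

lemma kerMap_toKer (h : Reflectable r s) (f : M ⟶ N) (i : α) (v : M.V (some i)) :
    kerMap s f (M.toKer h i v) = N.toKer h i (f.app (some i) v) := by
  refine Subtype.ext (funext fun l ↦ ?_)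
  rw [kerMap_apply, toKer_apply, toKer_apply, apply_ite (f.app (some l)), f.naturality, map_zero]

/-- Reflection at a sink as a functor. -/
def reflectFunctor (h : Reflectable r s) : Rep.{u, v} K r ⥤ Rep.{u, v} K (reflectRel r) where
  obj := reflect h
  map f :=
    { app
        | none => kerMap s f
        | some i => f.app (some i)
      naturality
        | none, none, _ => rfl
        | none, some _, v => app_ofKer f _ v
        | some _, none, v => kerMap_toKer h f _ v
        | some _, some _, v => f.naturality _ _ v }
  map_id _ := hom_ext fun
    | none, _ => rfl
    | some _, _ => rfl
  map_comp _ _ := hom_ext fun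
    | none, _ => rfl
    | some _, _ => rfl

instance (h : Reflectable r s) :
    (reflectFunctor.{u, v} (K := K) h).PreservesZeroMorphisms where
  map_zero _ _ := hom_ext fun
    | none, _ => rfl
    | some _, _ => rfl

/-- The representations whose space at the sink is generated by the incoming maps; these are the
ones that a reflection does not lose information on. -/
def sinkGenerated (s : α → ℤˣ) : ObjectProperty (Rep.{u, v} K r) :=
  fun M ↦ Function.Surjective (M.intoSink s)

lemma hom_ext_of_surjective (hM : Function.Surjective (M.intoSink s)) {f g : M ⟶ N}
    (h : ∀ i v, f.app (some i) v = g.app (some i) v) : f = g := by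
  refine hom_ext fun
    | none, v => ?_
    | some i, v => h i v
  obtain ⟨w, rfl⟩ := hM v
  simp only [← intoSink_naturality, h]

lemma ofKer_eq_val (M : Rep.{u, v} K r) (v : LinearMap.ker (M.intoSink s)) (l : preds r) :
    M.ofKer s l v = v.1 l := by
  rw [ofKer_apply, sum_preds_map_self]

lemma val_apply_of_reflect_hom {h : Reflectable r s} (g : reflect h M ⟶ reflect h N)
    {v : LinearMap.ker (M.intoSink s)} {w : LinearMap.ker (N.intoSink s)}
    (hw : g.app none v = w) (l : preds r) : w.1 l = g.app (some l) (v.1 l) := by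
  rw [← ofKer_eq_val, ← ofKer_eq_val, ← hw]
  exact (g.naturality none (some l) v).symm

lemma exists_linearMap_of_reflect_hom {h : Reflectable r s}
    (hM : Function.Surjective (M.intoSink s)) (g : reflect h M ⟶ reflect h N) :
    ∃ k : M.V none →ₗ[K] N.V none, ∀ (l : preds r) (v : M.V (some l)),
      k (M.map (some l) none v) = N.map (some l) none (g.app (some l) v) := by
  let G (i : α) : M.V (some i) →ₗ[K] N.V (some i) := g.app (some i)
  obtain ⟨k, hk⟩ := exists_comp_eq_of_ker_le hM
    (g := N.intoSink s ∘ₗ LinearMap.pi fun l : preds r ↦ G l ∘ₗ LinearMap.proj l) fun v hv ↦ by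
      obtain ⟨w, hw⟩ : ∃ w : LinearMap.ker (N.intoSink s), g.app none ⟨v, hv⟩ = w := ⟨_, rfl⟩
      exact (congrArg _ (funext fun l ↦ (val_apply_of_reflect_hom g hw l).symm)).trans w.2
  refine ⟨k, fun l v ↦ ?_⟩
  let x : ∀ m : preds r, M.V (some m) := Pi.single l v
  have hx : (fun m : preds r ↦ G m (x m)) = Pi.single l (G l v) :=
    funext fun m ↦ Pi.apply_single (fun m : preds r ↦ G m) (fun _ ↦ map_zero _) l v m
  have hl : (s l : ℤ) • k (M.map (some l) none v) = (s l : ℤ) • N.map (some l) none (G l v) :=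
    calc (s l : ℤ) • k (M.map (some l) none v)
      _ = k (M.intoSink s x) := by rw [intoSink_single, map_zsmul]
      _ = N.intoSink s (fun m : preds r ↦ G m (x m)) := hk x
      _ = (s l : ℤ) • N.map (some l) none (G l v) := by rw [hx, intoSink_single]
  exact (s l).isUnit.smul_left_cancel.1 hl

lemma exists_hom_of_reflect_hom {h : Reflectable r s} (hM : Function.Surjective (M.intoSink s))
    (g : reflect h M ⟶ reflect h N) :
    ∃ f : M ⟶ N, ∀ i (v : M.V (some i)), f.app (some i) v = g.app (some i) v := by
  let G (i : α) : M.V (some i) →ₗ[K] N.V (some i) := g.app (some i)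
  have hG (i j : α) (v : M.V (some i)) :
      G j (M.map (some i) (some j) v) = N.map (some i) (some j) (G i v) :=
    g.naturality (some i) (some j) v
  obtain ⟨k, hk⟩ : ∃ k : M.V none →ₗ[K] N.V none, ∀ (l : preds r) (v : M.V (some l)),
      k (M.map (some l) none v) = N.map (some l) none (G l v) :=
    exists_linearMap_of_reflect_hom hM g
  have hk' (i : α) (v : M.V (some i)) :
      k (M.map (some i) none v) = N.map (some i) none (G i v) := by
    by_cases hi : r (some i) none
    · obtain ⟨l, hl, hil⟩ := h.factor i hi
      have hln := rel_none_of_mem_preds hl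
      rw [← M.map_map _ _ _ hil hln, ← N.map_map _ _ _ hil hln, hk ⟨l, hl⟩, hG]
    · rw [M.map_eq_zero _ _ hi, N.map_eq_zero _ _ hi, map_zero]
  exact ⟨⟨fun | none => k | some i => G i, fun
    | none, none, v => by rw [M.map_self, N.map_self]
    | none, some j, v => by
      rw [M.map_eq_zero _ _ (h.sink j), N.map_eq_zero _ _ (h.sink j), map_zero]
    | some i, none, v => hk' i v
    | some i, some j, v => hG i j v⟩, fun _ _ ↦ rfl⟩

instance (h : Reflectable r s) :
    ((sinkGenerated.{u, v} (K := K) s).ι ⋙ reflectFunctor h).Faithful where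
  map_injective {M N f g} hfg := by
    refine ObjectProperty.hom_ext _ (hom_ext_of_surjective M.property fun i v ↦ ?_)
    exact congrArg (fun k : reflect h M.obj ⟶ reflect h N.obj ↦ k.app (some i) v) hfg

instance (h : Reflectable r s) :
    ((sinkGenerated.{u, v} (K := K) s).ι ⋙ reflectFunctor h).Full where
  map_surjective {M N} g := by
    obtain ⟨f, hf⟩ := exists_hom_of_reflect_hom M.property g
    refine ⟨ObjectProperty.homMk f, hom_ext fun
      | none, v => Subtype.ext <| funext fun l ↦ ?_
      | some i, v => hf i v⟩
    obtain ⟨w, hw⟩ : ∃ w : LinearMap.ker (N.obj.intoSink s), g.app none v = w := ⟨_, rfl⟩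
    exact (hf l (v.1 l)).trans <| (val_apply_of_reflect_hom g hw l).symm.trans
      (congrArg (fun w : LinearMap.ker (N.obj.intoSink s) ↦ w.1 l) hw.symm)

end ReflectionFunctor

end Rep

/-- The indecomposable representations of `r` with dimension vector in `D` fall into finitely many
isomorphism classes. -/
def FiniteIndec (K : Type u) [Field K] {ι : Type} (r : ι → ι → Bool) (D : Set (ι → ℤ)) : Prop :=
  FiniteUpToIso fun M : Rep.{u, v} K r ↦ IsIndec M ∧ M.dim ∈ D

namespace Rep

section ReflectionStep

variable {α : Type} {K : Type u} [Field K] {r : Option α → Option α → Bool} {s : α → ℤˣ}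
  {M N : Rep.{u, v} K r}

/-- The morphism between representations supported at the vertex `none` given by a linear map. -/
def homOfSupport (hM : ∀ i, Subsingleton (M.V (some i))) (hN : ∀ i, Subsingleton (N.V (some i)))
    (f : M.V none →ₗ[K] N.V none) : M ⟶ N where
  app
    | none => f
    | some _ => 0
  naturality
    | none, none, v => by rw [M.map_self, N.map_self]
    | none, some j, _ => (hN j).elim _ _
    | some i, _, v => by rw [(hM i).elim v 0]; simp only [map_zero]

lemma nonempty_iso_of_support (hM : ∀ i, Subsingleton (M.V (some i)))
    (hN : ∀ i, Subsingleton (N.V (some i))) (e : M.V none ≃ₗ[K] N.V none) : Nonempty (M ≅ N) :=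
  ⟨⟨homOfSupport hM hN e, homOfSupport hN hM e.symm,
    hom_ext fun | none, v => e.symm_apply_apply v | some i, _ => (hM i).elim _ _,
    hom_ext fun | none, v => e.apply_symm_apply v | some i, _ => (hN i).elim _ _⟩⟩

variable [Fintype α] [DecidableEq α]

lemma support_of_not_surjective (h : Reflectable r s) (hM : IsIndec M)
    (hs : ¬ Function.Surjective (M.intoSink s)) :
    (∀ i, Subsingleton (M.V (some i))) ∧ Module.finrank K (M.V none) = 1 := by
  obtain ⟨φ, hφ, hφs⟩ := Submodule.exists_le_ker_of_lt_top _
    (lt_top_iff_ne_top.2 (hs ∘ LinearMap.range_eq_top.1))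
  obtain ⟨x, hx⟩ : ∃ x, φ x = 1 := LinearMap.surjective hφ 1
  let e : M ⟶ M :=
    { app
        | none => φ.smulRight x
        | some _ => 0
      naturality
        | none, none, v => by rw [M.map_self, M.map_self]
        | none, some j, v => (M.map_eq_zero _ _ (h.sink j) _).symm
        | some i, none, v => by
          have := hφs (map_none_mem_range_intoSink h M i v)
          simp_all
        | some i, some j, v => (map_zero _).symm }
  have he : e ≫ e = e := hom_ext fun
    | none, v => by simp [e, hx]
    | some _, _ => rfl
  have he₀ : e ≠ 0 := fun h₀ ↦ by
    have hex : φ x • x = 0 := congrArg (fun f : M ⟶ M ↦ f.app none x) h₀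
    rw [hx, one_smul] at hex
    simp [hex] at hx
  have he₁ : ∀ i v, e.app i v = v := fun i v ↦ by rw [(hM.2 e he).resolve_left he₀, id_app]
  refine ⟨fun i ↦ subsingleton_of_forall_eq 0 fun v ↦ (he₁ (some i) v).symm, ?_⟩
  refine finrank_eq_one x (by rintro rfl; simp at hx) fun v ↦ ⟨φ v, he₁ none v⟩

/-- The effect of the reflection at the vertex `none` on dimension vectors. -/
def dimReflect (r : Option α → Option α → Bool) : (Option α → ℤ) →ₗ[ℤ] Option α → ℤ :=
  LinearMap.pi fun
    | none => ∑ l ∈ preds r, LinearMap.proj (some l) - LinearMap.proj none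
    | some i => LinearMap.proj (some i)

lemma dim_reflect (h : Reflectable r s) (hM : Function.Surjective (M.intoSink s)) :
    (reflect h M).dim = dimReflect r M.dim := by
  funext i
  cases i with
  | some i => rfl
  | none =>
    have hrank := (M.intoSink s).finrank_range_add_finrank_ker
    rw [LinearMap.range_eq_top.2 hM, finrank_top, Module.finrank_pi_fintype] at hrank
    rw [Finset.sum_coe_sort (preds r) fun l ↦ Module.finrank K (M.V (some l)), ← @Nat.cast_inj ℤ,
      Nat.cast_add, Nat.cast_sum] at hrank
    change (Module.finrank K (LinearMap.ker (M.intoSink s)) : ℤ) = _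
    simpa [dimReflect, dim] using eq_sub_of_add_eq' hrank

lemma finiteIndec_of_reflect (h : Reflectable r s) {D : Set (Option α → ℤ)}
    (hD : FiniteIndec.{u, v} K (reflectRel r) D) :
    FiniteIndec.{u, v} K r (dimReflect r ⁻¹' D) := by
  let F := (sinkGenerated.{u, v} (K := K) s).ι ⋙ reflectFunctor h
  have hgen : FiniteUpToIso fun M : Rep.{u, v} K r ↦
      sinkGenerated s M ∧ IsIndec M ∧ dimReflect r M.dim ∈ D := by
    refine hD.of_reflects_iso (fun M hM ↦ F.obj ⟨M, hM.1⟩) (fun M hM ↦ ⟨?_, ?_⟩)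
      fun M N hM hN ⟨e⟩ ↦ ⟨(sinkGenerated s).ι.mapIso (F.preimageIso e)⟩
    · exact (IsIndec.of_map (sinkGenerated s).ι (X := ⟨M, hM.1⟩) hM.2.1).map F
    · change (reflect h M).dim ∈ D
      rw [dim_reflect h hM.1]
      exact hM.2.2
  have hsimple : FiniteUpToIso fun M : Rep.{u, v} K r ↦ IsIndec M ∧ ¬ sinkGenerated s M :=
    finiteUpToIso_of_forall_iso fun M N hM hN ↦ by
      obtain ⟨hM₀, hM₁⟩ := support_of_not_surjective h hM.1 hM.2
      obtain ⟨hN₀, hN₁⟩ := support_of_not_surjective h hN.1 hN.2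
      exact nonempty_iso_of_support hM₀ hN₀ (LinearEquiv.ofFinrankEq _ _ (hM₁.trans hN₁.symm))
  exact (hgen.or hsimple).mono fun M hM ↦ by
    by_cases hs : sinkGenerated s M
    · exact .inl ⟨hs, hM⟩
    · exact .inr ⟨hM.1, hs⟩

end ReflectionStep

section Restrict

variable {ι κ : Type} {K : Type u} [Field K] {r : κ → κ → Bool} {M : Rep.{u, v} K r}

/-- The restriction of representations along a map of vertices. -/
def restrict (f : ι → κ) : Rep.{u, v} K r ⥤ Rep.{u, v} K fun i j ↦ r (f i) (f j) where
  obj M :=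
    { V i := M.V (f i)
      map i j := M.map (f i) (f j)
      map_self i := M.map_self (f i)
      map_map i j k := M.map_map (f i) (f j) (f k)
      map_eq_zero i j := M.map_eq_zero (f i) (f j) }
  map g := { app i := g.app (f i), naturality i j := g.naturality (f i) (f j) }

instance (f : ι → κ) : (restrict.{u, v} (K := K) (r := r) f).PreservesZeroMorphisms where

lemma map_map_of_eq_left {i j : κ} (h : i = j) (k : κ) (v : M.V i) :
    M.map j k (M.map i j v) = M.map i k v := by
  subst h
  rw [M.map_self]

lemma map_map_of_eq_right (i : κ) {j k : κ} (h : j = k) (v : M.V i) :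
    M.map j k (M.map i j v) = M.map i k v := by
  subst h
  rw [M.map_self]

lemma restrict_faithful {f : ι → κ} (hf : Function.Surjective f) :
    (restrict.{u, v} (K := K) (r := r) f).Faithful where
  map_injective {M N g g'} h := hom_ext fun j v ↦ by
    obtain ⟨i, rfl⟩ := hf j
    exact congrArg (fun k : (restrict f).obj M ⟶ (restrict f).obj N ↦ k.app i v) h

lemma restrict_full {f : ι → κ} (hf : Function.Surjective f) :
    (restrict.{u, v} (K := K) (r := r) f).Full where
  map_surjective {M N} g := by
    obtain ⟨σ, hσ⟩ := hf.hasRightInverse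
    let G (i : ι) : M.V (f i) →ₗ[K] N.V (f i) := g.app i
    have hG (i j : ι) (v : M.V (f i)) : G j (M.map (f i) (f j) v) = N.map (f i) (f j) (G i v) :=
      g.naturality i j v
    have key (i j : κ) (v : M.V i) :
        N.map (f (σ j)) j (G (σ j) (M.map i (f (σ j)) v)) =
          N.map (f (σ i)) j (G (σ i) (M.map i (f (σ i)) v)) := by
      rw [← map_map_of_eq_left (hσ i).symm (f (σ j)), hG, map_map_of_eq_right _ (hσ j)]
    refine ⟨⟨fun j ↦ N.map (f (σ j)) j ∘ₗ G (σ j) ∘ₗ M.map j (f (σ j)), fun i j v ↦ ?_⟩,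
      hom_ext fun i (v : M.V (f i)) ↦ ?_⟩
    · simp only [LinearMap.comp_apply]
      rw [map_map_of_eq_right _ (hσ j).symm, map_map_of_eq_left (hσ i), key]
    · change N.map _ _ (G _ (M.map _ _ v)) = G i v
      rw [← hG, map_map_of_eq_left (hσ (f i)).symm, M.map_self]

lemma finiteIndec_of_restrict {f : ι → κ} (hf : Function.Surjective f) {D : Set (ι → ℤ)}
    (hD : FiniteIndec.{u, v} K (fun i j ↦ r (f i) (f j)) D) :
    FiniteIndec.{u, v} K r {d | d ∘ f ∈ D} := by
  have := restrict_faithful.{u, v} (K := K) (r := r) hf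
  have := restrict_full.{u, v} (K := K) (r := r) hf
  exact hD.of_reflects_iso (fun M _ ↦ (restrict f).obj M)
    (fun M hM ↦ ⟨hM.1.map (restrict f), hM.2⟩) fun M N _ _ ⟨e⟩ ↦ ⟨(restrict f).preimageIso e⟩

end Restrict

section Transport

variable {α ι : Type} [Fintype α] [DecidableEq α] {K : Type u} [Field K]

/-- The reflected relation, for a vertex singled out by an enumeration of the vertices. -/
def reflectRelAt (e : Option α ≃ ι) (r : ι → ι → Bool) (i j : ι) : Bool :=
  reflectRel (fun i j ↦ r (e i) (e j)) (e.symm i) (e.symm j)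

/-- The effect of a reflection on dimension vectors, for a vertex singled out by an enumeration of
the vertices. -/
def dimReflectAt (e : Option α ≃ ι) (r : ι → ι → Bool) : (ι → ℤ) →ₗ[ℤ] ι → ℤ :=
  LinearMap.funLeft ℤ ℤ e.symm ∘ₗ dimReflect (fun i j ↦ r (e i) (e j)) ∘ₗ LinearMap.funLeft ℤ ℤ e

lemma finiteIndec_of_reflectRelAt (e : Option α ≃ ι) {r : ι → ι → Bool} {s : α → ℤˣ}
    (h : Reflectable (fun i j ↦ r (e i) (e j)) s) {D : Set (ι → ℤ)}
    (hD : FiniteIndec.{u, v} K (reflectRelAt e r) D) :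
    FiniteIndec.{u, v} K r (dimReflectAt e r ⁻¹' D) :=
  finiteIndec_of_restrict e.surjective
    (finiteIndec_of_reflect h (finiteIndec_of_restrict e.symm.surjective hD))

end Transport

section Path

variable {n : ℕ} {K : Type u} [Field K]

/-- The relation `r`, with its values stored in the digits of a natural number. It equals `r`, but
makes the kernel evaluate `r` only once. -/
def tabulate (r : Fin n → Fin n → Bool) (i j : Fin n) : Bool :=
  (Nat.ofBits fun k : Fin (n * n) ↦ r k.divNat k.modNat).testBit (finProdFinEquiv (i, j))

lemma tabulate_eq (r : Fin n → Fin n → Bool) : tabulate r = r := by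
  funext i j
  rw [tabulate, Nat.testBit_ofBits_lt _ _ (Fin.is_lt _)]
  exact congrArg (fun p : Fin n × Fin n ↦ r p.1 p.2) (finProdFinEquiv.symm_apply_apply (i, j))

/-- Reflections at the first entries of the pairs in the list lead from `r` to `r'`. The second
entry of a pair is the vertex that gets the sign `-1`. -/
def IsReflectionPath :
    List (Fin (n + 1) × Fin (n + 1)) → (r r' : Fin (n + 1) → Fin (n + 1) → Bool) → Prop
  | [], r, r' => r = r'
  | (x, y) :: p, r, r' =>
    let e := (finSuccEquiv' x).symm
    Reflectable (fun i j ↦ r (e i) (e j)) (fun l ↦ if e (some l) = y then -1 else 1) ∧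
      IsReflectionPath p (tabulate (reflectRelAt e r)) r'

instance decidableIsReflectionPath (p : List (Fin (n + 1) × Fin (n + 1)))
    (r r' : Fin (n + 1) → Fin (n + 1) → Bool) : Decidable (IsReflectionPath p r r') :=
  match p with
  | [] => inferInstanceAs (Decidable (r = r'))
  | (x, _) :: p =>
    let e := (finSuccEquiv' x).symm
    have : Decidable (IsReflectionPath p (tabulate (reflectRelAt e r)) r') :=
      decidableIsReflectionPath p _ r'
    inferInstanceAs (Decidable (Reflectable _ _ ∧ IsReflectionPath p _ r'))

/-- The effect of the reflections along a path on dimension vectors. -/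
def dimPath : List (Fin (n + 1) × Fin (n + 1)) → (r : Fin (n + 1) → Fin (n + 1) → Bool) →
    (Fin (n + 1) → ℤ) →ₗ[ℤ] Fin (n + 1) → ℤ
  | [], _ => LinearMap.id
  | (x, _) :: p, r =>
    let e := (finSuccEquiv' x).symm
    dimPath p (tabulate (reflectRelAt e r)) ∘ₗ dimReflectAt e r

lemma finiteIndec_of_isReflectionPath {p : List (Fin (n + 1) × Fin (n + 1))}
    {r r' : Fin (n + 1) → Fin (n + 1) → Bool} (hp : IsReflectionPath p r r')
    {D : Set (Fin (n + 1) → ℤ)} (hD : FiniteIndec.{u, v} K r' D) :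
    FiniteIndec.{u, v} K r (dimPath p r ⁻¹' D) := by
  induction p generalizing r with
  | nil => exact (show r = r' from hp) ▸ hD
  | cons xy p ih =>
    obtain ⟨h, hp⟩ := hp
    have ih := ih hp
    rw [tabulate_eq] at ih
    rw [dimPath, tabulate_eq, LinearMap.coe_comp, Set.preimage_comp]
    exact finiteIndec_of_reflectRelAt _ h ih

lemma finiteIndec_univ_of_dimPath_pow {p : List (Fin (n + 1) × Fin (n + 1))}
    {r : Fin (n + 1) → Fin (n + 1) → Bool} (hp : IsReflectionPath p r r) {k : ℕ}
    (hk : dimPath p r ^ k = -1) : FiniteIndec.{u, v} K r Set.univ := by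
  have hpow (m : ℕ) :
      FiniteIndec.{u, v} K r (⇑(dimPath p r ^ m) ⁻¹' {d : Fin (n + 1) → ℤ | ¬ 0 ≤ d}) := by
    induction m with
    | zero => exact finiteUpToIso_of_forall_not fun M hM ↦ hM.2 M.dim_nonneg
    | succ m ih => exact finiteIndec_of_isReflectionPath hp ih
  refine (hpow k).mono fun M hM ↦ ⟨hM.1, fun hneg ↦ ?_⟩
  obtain ⟨i, hi⟩ := exists_dim_ne_zero hM.1
  rw [hk] at hneg
  exact hi (le_antisymm (neg_nonneg.1 (hneg i)) (M.dim_nonneg i))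

end Path

/-! ### From the ladder to a tree of type `E₈` -/

/-- The commutative ladder of degree `4`, with the vertex `(i, j)` numbered `4 * i + j`. -/
def ladderRel (i j : Fin 8) : Bool :=
  decide ((finProdFinEquiv.symm i : Fin 2 × Fin 4) ≤ finProdFinEquiv.symm j)

/-- A tree of type `E₈`, namely `0 → 4 → 5 → 6 → 7` followed by `7 → 2` and `7 → 3 → 1`, as a
relation. -/
def e₈Rel (i j : Fin 8) : Bool :=
  decide (j ∈ (![Finset.univ, {1}, {2}, {1, 3}, {0}ᶜ, {0, 4}ᶜ, {0, 4, 5}ᶜ, {0, 4, 5, 6}ᶜ] :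
    Fin 8 → Finset (Fin 8)) i)

lemma isReflectionPath_ladderRel :
    IsReflectionPath [(7, 6), (3, 0), (6, 7), (5, 6), (4, 0), (7, 6), (2, 0), (3, 0), (6, 7),
      (5, 0), (4, 0), (7, 6), (2, 0), (3, 7), (6, 0), (5, 0), (4, 0), (7, 3), (6, 0), (5, 0),
      (4, 0)] ladderRel e₈Rel := by
  decide +kernel

/-- An enumeration of the vertices of `e₈Rel` that is a sequence of sinks. The second entries are
the signs required by `IsReflectionPath`. -/
def e₈Sinks : List (Fin 8 × Fin 8) :=
  [(1, 0), (3, 0), (2, 0), (7, 3), (6, 0), (5, 0), (4, 0), (0, 1)]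

lemma isReflectionPath_e₈Rel : IsReflectionPath e₈Sinks e₈Rel e₈Rel := by
  decide +kernel

/-- The matrix of the Coxeter transformation of `e₈Rel`. -/
def e₈Coxeter : Matrix (Fin 8) (Fin 8) ℤ :=
  !![0, -1, -1, 0, 0, 0, 0, 1;
    0, -1, 0, 1, 0, 0, 0, 0;
    0, 0, -1, 0, 0, 0, 0, 1;
    0, -1, 0, 0, 0, 0, 0, 1;
    1, -1, -1, 0, 0, 0, 0, 1;
    0, -1, -1, 0, 1, 0, 0, 1;
    0, -1, -1, 0, 0, 1, 0, 1;
    0, -1, -1, 0, 0, 0, 1, 1]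

lemma dimPath_e₈Rel : dimPath e₈Sinks e₈Rel = Matrix.toLin' e₈Coxeter := by
  have h (j : Fin 8) : dimPath e₈Sinks e₈Rel (Pi.single j 1) = fun i ↦ e₈Coxeter i j := by
    revert j
    decide +kernel
  refine (Pi.basisFun ℤ (Fin 8)).ext fun j ↦ ?_
  rw [Pi.basisFun_apply, h, Matrix.toLin'_apply, Matrix.mulVec_single_one]
  rfl

lemma e₈Coxeter_pow : e₈Coxeter ^ 15 = -1 := by
  have h : e₈Coxeter ^ 5 =
      !![1, 0, -1, -1, 0, 0, 0, 1;
        0, 0, -1, -1, 1, 0, 0, 1;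
        1, -1, -1, -1, 0, 1, 0, 1;
        1, -1, -2, -1, 1, 0, 1, 1;
        1, -1, -1, -1, 1, 0, 0, 1;
        1, -1, -2, -1, 1, 1, 0, 1;
        1, -1, -2, -2, 1, 1, 1, 1;
        1, -2, -3, -2, 1, 1, 1, 2] := by
    rw [pow_succ, pow_mul _ 2 2, sq, sq]
    decide +kernel
  rw [pow_mul _ 5 3, h, pow_succ, sq]
  decide +kernel

lemma finiteIndec_ladderRel (K : Type u) [Field K] :
    FiniteIndec.{u, v} K ladderRel Set.univ := by
  refine finiteIndec_of_isReflectionPath isReflectionPath_ladderRel (D := Set.univ)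
    (finiteIndec_univ_of_dimPath_pow isReflectionPath_e₈Rel (k := 15) ?_)
  rw [dimPath_e₈Rel, ← Matrix.toLin'_pow, e₈Coxeter_pow, map_neg, Matrix.toLin'_one]
  rfl

end Rep

/-! ### From modules to representations -/

section IdempotentComplete

variable {C : Type*} [Category* C] [Preadditive C] [HasBinaryBiproducts C] [IsIdempotentComplete C]

lemma exists_biprod_of_idempotent {X : C} (e : X ⟶ X) (he : e ≫ e = e) :
    ∃ Y Z : C, Nonempty (X ≅ Y ⊞ Z) ∧ (IsZero Y → e = 0) ∧ (IsZero Z → e = 𝟙 X) := by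
  obtain ⟨Y, i, p, hip, hpi⟩ := IsIdempotentComplete.idempotents_split X e he
  obtain ⟨Z, j, q, hjq, hqj⟩ := IsIdempotentComplete.idempotents_split X (𝟙 X - e)
    (by simp [he])
  have hiq : i ≫ q = 0 := calc
    i ≫ q = i ≫ (q ≫ j) ≫ q := by simp [hjq]
    _ = 0 := by simp [hqj, ← hpi, reassoc_of% hip]
  have hjp : j ≫ p = 0 := calc
    j ≫ p = (j ≫ q) ≫ j ≫ p ≫ i ≫ p := by simp [hip, hjq]
    _ = j ≫ (q ≫ j) ≫ (p ≫ i) ≫ p := by simp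
    _ = 0 := by simp [hqj, ← hpi, hip]
  refine ⟨Y, Z, ⟨⟨biprod.lift p q, biprod.desc i j, ?_, ?_⟩⟩, fun hY ↦ ?_, fun hZ ↦ ?_⟩
  · rw [biprod.lift_desc, hpi, hqj, add_sub_cancel]
  · ext <;> simp [hip, hjq, hiq, hjp]
  · rw [← hpi, hY.eq_of_tgt p 0, zero_comp]
  · rw [hZ.eq_of_tgt q 0, zero_comp] at hqj
    exact (sub_eq_zero.1 hqj.symm).symm

lemma isIndec_of_forall_biprod {X : C} (hX : ¬ IsZero X)
    (h : ∀ Y Z : C, Nonempty (X ≅ Y ⊞ Z) → IsZero Y ∨ IsZero Z) : IsIndec X := by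
  refine ⟨mt (IsZero.iff_id_eq_zero X).2 hX, fun e he ↦ ?_⟩
  obtain ⟨Y, Z, hXYZ, hY, hZ⟩ := exists_biprod_of_idempotent e he
  exact (h Y Z hXYZ).imp hY hZ

end IdempotentComplete

/-- A family of elements of an algebra that span it and multiply like the basis of the algebra of
the relation `r`, acting from the left. Some of them may be zero. -/
structure IsArrowFamily (K : Type*) [Field K] {S : Type*} [Ring S] [Algebra K S] {ι : Type}
    [Fintype ι] (r : ι → ι → Bool) (u : ι → ι → S) : Prop where
  eq_zero : ∀ i j, ¬ r i j → u i j = 0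
  mul_eq : ∀ i j k, r i j → r j k → u j k * u i j = u i k
  mul_eq_zero : ∀ i j k l, j ≠ k → u k l * u i j = 0
  mul_self : ∀ i j, u i j * u i i = u i j
  self_mul : ∀ i j, u j j * u i j = u i j
  sum_eq_one : ∑ i, u i i = 1
  span_eq_top : Submodule.span K (Set.range (Function.uncurry u)) = ⊤

section Extend

variable {S : Type w} [Ring S] {ι κ : Type} {f : κ → ι} {u : κ → κ → S}

/-- The extension of a family along a map of vertices, by zero. -/
def extendByZero (f : κ → ι) (u : κ → κ → S) (i j : ι) : S :=
  Function.extend (Prod.map f f) (Function.uncurry u) 0 (i, j)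

lemma extendByZero_apply (hf : Function.Injective f) (p q : κ) :
    extendByZero f u (f p) (f q) = u p q :=
  (hf.prodMap hf).extend_apply (Function.uncurry u) 0 (p, q)

lemma extendByZero_of_left {i : ι} (hi : i ∉ Set.range f) (j : ι) : extendByZero f u i j = 0 :=
  Function.extend_apply' _ _ _ fun ⟨p, hp⟩ ↦ hi ⟨p.1, congrArg Prod.fst hp⟩

lemma extendByZero_of_right (i : ι) {j : ι} (hj : j ∉ Set.range f) : extendByZero f u i j = 0 :=
  Function.extend_apply' _ _ _ fun ⟨p, hp⟩ ↦ hj ⟨p.2, congrArg Prod.snd hp⟩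

lemma extendByZero_induction {P : ι → ι → S → Prop} (hf : Function.Injective f)
    (h : ∀ p q, P (f p) (f q) (u p q)) (h₀ : ∀ i j, P i j 0) (i j : ι) :
    P i j (extendByZero f u i j) := by
  by_cases hi : i ∈ Set.range f
  · by_cases hj : j ∈ Set.range f
    · obtain ⟨p, rfl⟩ := hi
      obtain ⟨q, rfl⟩ := hj
      rw [extendByZero_apply hf]
      exact h p q
    · rw [extendByZero_of_right i hj]
      exact h₀ i j
  · rw [extendByZero_of_left hi]
    exact h₀ i j

lemma IsArrowFamily.extend {K : Type*} [Field K] [Algebra K S] [Fintype ι] [Fintype κ]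
    {r : ι → ι → Bool} (hf : Function.Injective f)
    (hu : IsArrowFamily K (fun p q ↦ r (f p) (f q)) u)
    (hr : ∀ i j k, r i j → r j k → i ∈ Set.range f → k ∈ Set.range f → j ∈ Set.range f) :
    IsArrowFamily K r (extendByZero f u) where
  eq_zero := extendByZero_induction (P := fun i j x ↦ ¬ r i j → x = 0) hf hu.eq_zero
    fun _ _ _ ↦ rfl
  mul_eq i j k hij hjk := by
    by_cases hi : i ∈ Set.range f
    · by_cases hk : k ∈ Set.range f
      · obtain ⟨q, rfl⟩ := hr i j k hij hjk hi hk
        obtain ⟨p, rfl⟩ := hi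
        obtain ⟨s, rfl⟩ := hk
        simp only [extendByZero_apply hf, hu.mul_eq p q s hij hjk]
      · rw [extendByZero_of_right _ hk, extendByZero_of_right _ hk, zero_mul]
    · rw [extendByZero_of_left hi, extendByZero_of_left hi, mul_zero]
  mul_eq_zero i j k l hjk := by
    revert hjk
    refine extendByZero_induction (P := fun _ j x ↦ j ≠ k → extendByZero f u k l * x = 0) hf
      (fun p q hqk ↦ ?_) (fun _ _ _ ↦ mul_zero _) i j
    revert hqk
    exact extendByZero_induction (P := fun k _ x ↦ f q ≠ k → x * u p q = 0) hf
      (fun s t h ↦ hu.mul_eq_zero p q s t (ne_of_apply_ne f h)) (fun _ _ _ ↦ zero_mul _) k l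
  mul_self := extendByZero_induction (P := fun i _ x ↦ x * extendByZero f u i i = x) hf
    (fun p q ↦ by rw [extendByZero_apply hf, hu.mul_self]) fun _ _ ↦ zero_mul _
  self_mul := extendByZero_induction (P := fun _ j x ↦ extendByZero f u j j * x = x) hf
    (fun p q ↦ by rw [extendByZero_apply hf, hu.self_mul]) fun _ _ ↦ mul_zero _
  sum_eq_one := by
    rw [← hu.sum_eq_one]
    exact (Fintype.sum_of_injective f hf _ _ (fun i hi ↦ extendByZero_of_left hi i)
      fun p ↦ (extendByZero_apply hf p p).symm).symm
  span_eq_top := by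
    rw [eq_top_iff, ← hu.span_eq_top]
    refine Submodule.span_mono ?_
    rintro _ ⟨⟨p, q⟩, rfl⟩
    exact ⟨(f p, f q), extendByZero_apply hf p q⟩

end Extend

namespace IsArrowFamily

open ModuleCat

variable {K : Type u} [Field K] {S : Type w} [Ring S] [Algebra K S] {ι : Type} [Fintype ι]
  {r : ι → ι → Bool} {u : ι → ι → S}

/-- The space of a module at a vertex. -/
def space (_ : IsArrowFamily K r u) (M : ModuleCat.{v} S) (i : ι) : Submodule K M :=
  LinearMap.range (Algebra.lsmul K K M (u i i))

variable {M N : ModuleCat.{v} S} (hu : IsArrowFamily K r u)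

lemma smul_mem_space (i j : ι) (m : M) : u i j • m ∈ hu.space M j :=
  ⟨u i j • m, by simp only [Algebra.lsmul_coe, smul_smul, hu.self_mul]⟩

lemma self_smul {i : ι} {m : M} (hm : m ∈ hu.space M i) : u i i • m = m := by
  obtain ⟨m, rfl⟩ := hm
  rw [Algebra.lsmul_coe, smul_smul, hu.mul_self]

lemma smul_eq_zero {i j k : ι} (hij : i ≠ j) {m : M} (hm : m ∈ hu.space M i) : u j k • m = 0 := by
  rw [← hu.self_smul hm, smul_smul, hu.mul_eq_zero _ _ _ _ hij, zero_smul]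

/-- The `K`-linear map assembled from linear maps on the spaces at the vertices. -/
def assemble (g : ∀ i, hu.space M i →ₗ[K] hu.space N i) : M →ₗ[K] N :=
  ∑ i, (hu.space N i).subtype ∘ₗ g i ∘ₗ
    (Algebra.lsmul K K M (u i i)).codRestrict _ (hu.smul_mem_space i i)

lemma assemble_apply (g : ∀ i, hu.space M i →ₗ[K] hu.space N i) (m : M) :
    hu.assemble g m = ∑ i, (g i ⟨u i i • m, hu.smul_mem_space i i m⟩ : N) := by
  simp only [assemble, LinearMap.sum_apply]
  rfl

lemma assemble_of_mem (g : ∀ i, hu.space M i →ₗ[K] hu.space N i) {i : ι} {m : M}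
    (hm : m ∈ hu.space M i) : hu.assemble g m = g i ⟨m, hm⟩ := by
  rw [assemble_apply, Finset.sum_eq_single i]
  · simp only [hu.self_smul hm]
  · intro j _ hj
    simp only [hu.smul_eq_zero hj.symm hm]
    exact congrArg Subtype.val (map_zero (g j))
  · simp

lemma smul_assemble (g : ∀ i, hu.space M i →ₗ[K] hu.space N i) (i j : ι) (m : M) :
    u i j • hu.assemble g m = u i j • (g i ⟨u i i • m, hu.smul_mem_space i i m⟩ : N) := by
  rw [assemble_apply, Finset.smul_sum, Finset.sum_eq_single i]
  · exact fun k _ hk ↦ hu.smul_eq_zero hk (g k _).2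
  · simp

lemma assemble_smul (g : ∀ i, hu.space M i →ₗ[K] hu.space N i)
    (hg : ∀ i j (v : hu.space M i),
      (g j ⟨u i j • (v : M), hu.smul_mem_space i j (v : M)⟩ : N) = u i j • (g i v : N))
    (x : S) (m : M) : hu.assemble g (x • m) = x • hu.assemble g m := by
  have hx : x ∈ Submodule.span K (Set.range (Function.uncurry u)) :=
    hu.span_eq_top ▸ Submodule.mem_top
  induction hx using Submodule.span_induction with
  | mem x hx =>
    obtain ⟨⟨i, j⟩, rfl⟩ := hx
    change hu.assemble g (u i j • m) = u i j • hu.assemble g m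
    rw [smul_assemble, ← hg, hu.assemble_of_mem g (hu.smul_mem_space i j m)]
    simp only [smul_smul, hu.mul_self]
  | zero => simp
  | add x y _ _ hx hy => rw [add_smul, map_add, hx, hy, add_smul]
  | smul c x _ hx => rw [smul_assoc, map_smul, hx, smul_assoc]

variable [Module.Finite K S]

/-- The representation of `r` on the spaces of a module. -/
def rep (M : FGModuleCat.{v} S) : Rep.{u, v} K r where
  V i := hu.space M.obj i
  finite _ := have := Module.Finite.trans (R := K) S M.obj; inferInstance
  map i j := (Algebra.lsmul K K M.obj (u i j)).restrict fun m _ ↦ hu.smul_mem_space i j m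
  map_self _ v := Subtype.ext (hu.self_smul v.2)
  map_map i j k hij hjk v := Subtype.ext <|
    (smul_smul _ _ _).trans (congrArg (· • (v : M.obj)) (hu.mul_eq i j k hij hjk))
  map_eq_zero i j hij v := Subtype.ext <|
    (congrArg (· • (v : M.obj)) (hu.eq_zero i j hij)).trans (zero_smul _ _)

/-- The functor from modules to representations. -/
def functor : FGModuleCat.{v} S ⥤ Rep.{u, v} K r where
  obj := hu.rep
  map {M N} f :=
    { app i := (f.hom.hom.restrictScalars K).restrict (p := hu.space M.obj i)
        (q := hu.space N.obj i) fun m hm ↦ ⟨f.hom.hom m,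
          (map_smul f.hom.hom (u i i) m).symm.trans (congrArg _ (hu.self_smul hm))⟩
      naturality i j (v : hu.space M.obj i) :=
        Subtype.ext (map_smul f.hom.hom (u i j) (v : M.obj)) }

instance : hu.functor.PreservesZeroMorphisms where

instance : hu.functor.Faithful where
  map_injective {M N f g} h := FGModuleCat.hom_ext <| LinearMap.ext fun m ↦ by
    have hi (i : ι) : f.hom.hom (u i i • m) = g.hom.hom (u i i • m) :=
      congrArg (fun k : hu.rep M ⟶ hu.rep N ↦ (k.app i ⟨_, hu.smul_mem_space i i m⟩).1) h
    rw [← one_smul S m, ← hu.sum_eq_one, Finset.sum_smul, map_sum, map_sum]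
    exact Finset.sum_congr rfl fun i _ ↦ hi i

instance : hu.functor.Full where
  map_surjective {M N} g := by
    let G (i : ι) : hu.space M.obj i →ₗ[K] hu.space N.obj i := g.app i
    have hG (i j : ι) (v : hu.space M.obj i) :
        (G j ⟨u i j • (v : M.obj), hu.smul_mem_space i j (v : M.obj)⟩ : N.obj) =
          u i j • (G i v : N.obj) :=
      congrArg Subtype.val (g.naturality i j v)
    let f : M.obj →ₗ[S] N.obj := { hu.assemble G with map_smul' := hu.assemble_smul G hG }
    exact ⟨ObjectProperty.homMk (ModuleCat.ofHom f), Rep.hom_ext fun i v ↦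
      Subtype.ext (hu.assemble_of_mem G v.2)⟩

lemma isRepFiniteRing {S : Type} [Ring S] [Algebra K S] [Module.Finite K S] {u : ι → ι → S}
    (hu : IsArrowFamily K r u) (h : FiniteIndec.{u, 0} K r Set.univ) : IsRepFiniteRing S := by
  have hfin : FiniteUpToIso fun M : ModCat S ↦ IsFGMod M ∧ IsIndecMod M :=
    h.of_reflects_iso (fun M hM ↦ hu.rep ⟨M, hM.1⟩)
      (fun M hM ↦ ⟨((isIndec_of_forall_biprod hM.2.1 hM.2.2).of_map (ModuleCat.isFG S).ι
        (X := ⟨M, hM.1⟩)).map hu.functor, trivial⟩)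
      fun M N hM hN ⟨e⟩ ↦ ⟨(ModuleCat.isFG S).ι.mapIso (hu.functor.preimageIso e)⟩
  obtain ⟨n, f, hf⟩ := finiteUpToIso_iff.1 hfin
  exact ⟨n, f, fun M hfg hM ↦ hf M ⟨hfg, hM⟩⟩

end IsArrowFamily

namespace CommLadder

variable (K : Type) [Field K] {n : ℕ}

instance : Module.Finite K (CommLadder K n) :=
  inferInstanceAs (Module.Finite K (ladderSubalgebra K n))

instance : Module.Finite K (CommLadder K n)ᵐᵒᵖ :=
  Module.Finite.equiv (MulOpposite.opLinearEquiv K)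

/-- The matrix unit at `(p, q)`, which is zero unless `p ≤ q`. -/
def unit (p q : Fin 2 × Fin n) : CommLadder K n :=
  ⟨if p ≤ q then Matrix.single p q 1 else 0, fun i j hij ↦ by
    split_ifs with hpq
    · exact Matrix.single_apply_of_ne _ _ _ _ _ (by rintro ⟨rfl, rfl⟩; exact hij hpq)
    · rfl⟩

variable {K}

/-- The matrix of an element. -/
def toMatrix : CommLadder K n →ₐ[K] Matrix (Fin 2 × Fin n) (Fin 2 × Fin n) K :=
  (ladderSubalgebra K n).val

lemma toMatrix_injective : Function.Injective (toMatrix (K := K) (n := n)) :=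
  Subtype.val_injective

lemma toMatrix_of_not_le (a : CommLadder K n) {p q : Fin 2 × Fin n} (hpq : ¬ p ≤ q) :
    toMatrix a p q = 0 :=
  a.2 p q hpq

variable {p q s : Fin 2 × Fin n}

lemma toMatrix_unit (hpq : p ≤ q) : toMatrix (unit K p q) = Matrix.single p q 1 :=
  if_pos hpq

lemma unit_of_not_le (hpq : ¬ p ≤ q) : unit K p q = 0 :=
  toMatrix_injective (if_neg hpq)

lemma unit_mul_unit (hpq : p ≤ q) (hqs : q ≤ s) : unit K p q * unit K q s = unit K p s :=
  toMatrix_injective <| by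
    rw [map_mul, toMatrix_unit hpq, toMatrix_unit hqs, toMatrix_unit (hpq.trans hqs),
      Matrix.single_mul_single_same, one_mul]

lemma unit_mul_unit_of_ne (p : Fin 2 × Fin n) (hqs : q ≠ s) (t : Fin 2 × Fin n) :
    unit K p q * unit K s t = 0 := by
  by_cases hpq : p ≤ q
  · by_cases hst : s ≤ t
    · refine toMatrix_injective ?_
      rw [map_mul, toMatrix_unit hpq, toMatrix_unit hst, Matrix.single_mul_single_of_ne _ _ _ _ hqs,
        map_zero]
    · rw [unit_of_not_le hst, mul_zero]
  · rw [unit_of_not_le hpq, zero_mul]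

lemma eq_sum_unit (a : CommLadder K n) : a = ∑ p, ∑ q, toMatrix a p q • unit K p q := by
  refine toMatrix_injective ?_
  simp only [map_sum, map_smul]
  conv_lhs => rw [Matrix.matrix_eq_sum_single (toMatrix a)]
  refine Finset.sum_congr rfl fun p _ ↦ Finset.sum_congr rfl fun q _ ↦ ?_
  by_cases hpq : p ≤ q
  · rw [toMatrix_unit hpq, Matrix.smul_single, smul_eq_mul, mul_one]
  · rw [toMatrix_of_not_le a hpq, Matrix.single_zero, zero_smul]

lemma sum_unit : ∑ p, unit K (n := n) p p = 1 := by
  refine toMatrix_injective ?_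
  simp only [map_sum, map_one, toMatrix_unit le_rfl]
  exact Matrix.sum_single_one

lemma isArrowFamily_op_unit :
    IsArrowFamily K (fun p q : Fin 2 × Fin n ↦ decide (p ≤ q))
      fun p q ↦ MulOpposite.op (unit K p q) where
  eq_zero p q hpq := by rw [unit_of_not_le (by simpa using hpq), MulOpposite.op_zero]
  mul_eq p q s hpq hqs := by
    rw [← MulOpposite.op_mul, unit_mul_unit (of_decide_eq_true hpq) (of_decide_eq_true hqs)]
  mul_eq_zero p q s t hqs := by
    rw [← MulOpposite.op_mul, unit_mul_unit_of_ne p hqs, MulOpposite.op_zero]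
  mul_self p q := by
    by_cases hpq : p ≤ q
    · rw [← MulOpposite.op_mul, unit_mul_unit le_rfl hpq]
    · rw [unit_of_not_le hpq, MulOpposite.op_zero, zero_mul]
  self_mul p q := by
    by_cases hpq : p ≤ q
    · rw [← MulOpposite.op_mul, unit_mul_unit hpq le_rfl]
    · rw [unit_of_not_le hpq, MulOpposite.op_zero, mul_zero]
  sum_eq_one := by
    rw [← MulOpposite.op_one, ← sum_unit]
    exact (map_sum MulOpposite.opAddEquiv _ _).symm
  span_eq_top := by
    refine eq_top_iff.2 fun a _ ↦ ?_
    obtain ⟨b, rfl⟩ := (MulOpposite.opLinearEquiv K).surjective a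
    rw [eq_sum_unit b]
    simp only [map_sum, map_smul]
    exact Submodule.sum_mem _ fun p _ ↦ Submodule.sum_mem _ fun q _ ↦
      Submodule.smul_mem _ _ (Submodule.subset_span ⟨(p, q), rfl⟩)

theorem isRepFinite_of_le_four (K : Type) [Field K] (hn : n ≤ 4) :
    IsRepFinite (CommLadder K n) := by
  let f : Fin 2 × Fin n → Fin 8 := finProdFinEquiv ∘ Prod.map id (Fin.castLE hn)
  have hf : Function.Injective f :=
    finProdFinEquiv.injective.comp (Function.injective_id.prodMap (Fin.castLE_injective hn))
  have hr (p q : Fin 2 × Fin n) : Rep.ladderRel (f p) (f q) = decide (p ≤ q) := by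
    simp [f, Rep.ladderRel, Prod.le_def]
  have hlower (i j : Fin 8) (hij : Rep.ladderRel i j) (hj : j ∈ Set.range f) :
      i ∈ Set.range f := by
    obtain ⟨q, rfl⟩ := hj
    obtain ⟨⟨a, b⟩, rfl⟩ := (finProdFinEquiv (m := 2) (n := 4)).surjective i
    have hb : b ≤ Fin.castLE hn q.2 := by
      simpa [f, Rep.ladderRel] using (Prod.le_def.1 (of_decide_eq_true hij)).2
    exact ⟨(a, ⟨b, (Fin.le_def.1 hb).trans_lt q.2.2⟩), rfl⟩
  have hu := isArrowFamily_op_unit (K := K) (n := n)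
  simp only [← hr] at hu
  exact (hu.extend hf fun i j k _ hjk _ hk ↦ hlower j k hjk hk).isRepFiniteRing
    (Rep.finiteIndec_ladderRel K)

end CommLadder

/-! ### Tilting modules -/

section GeneratedBy

variable {C : Type u} [Category.{v} C] [Preadditive C]

/-- `N` lies in `Gen M`: finitely many morphisms `M ⟶ N` are jointly epimorphic, i.e. `N` is a
quotient of a finite direct sum of copies of `M` when such sums exist. -/
def IsGeneratedBy (N M : C) : Prop :=
  ∃ (k : ℕ) (f : Fin k → (M ⟶ N)), ∀ ⦃Z : C⦄ (u : N ⟶ Z), (∀ i, f i ≫ u = 0) → u = 0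

lemma IsGeneratedBy.of_fintype {ι : Type*} [Finite ι] {N M : C} (f : ι → (M ⟶ N))
    (hf : ∀ ⦃Z : C⦄ (u : N ⟶ Z), (∀ i, f i ≫ u = 0) → u = 0) : IsGeneratedBy N M := by
  obtain ⟨k, ⟨e⟩⟩ := Finite.exists_equiv_fin ι
  exact ⟨k, f ∘ e.symm, fun Z u hu ↦ hf u fun i ↦ by simpa using hu (e i)⟩

lemma IsGeneratedBy.trans {L M N : C} (hN : IsGeneratedBy N M) (hM : IsGeneratedBy M L) :
    IsGeneratedBy N L := by
  obtain ⟨k, f, hf⟩ := hN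
  obtain ⟨l, g, hg⟩ := hM
  refine .of_fintype (fun i : Fin k × Fin l ↦ g i.2 ≫ f i.1) fun Z u hu ↦ ?_
  exact hf u fun i ↦ hg _ fun j ↦ by simpa using hu (i, j)

lemma IsGeneratedBy.exists_epi [HasFiniteBiproducts C] {N M : C} (h : IsGeneratedBy N M) :
    ∃ (k : ℕ) (p : (⨁ fun _ : Fin k ↦ M) ⟶ N), Epi p := by
  obtain ⟨k, f, hf⟩ := h
  refine ⟨k, biproduct.desc f, Preadditive.epi_of_cancel_zero _ fun u hu ↦ hf u fun i ↦ ?_⟩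
  rw [← biproduct.ι_desc f i, Category.assoc, hu, comp_zero]

end GeneratedBy

section AddClosure

open Abelian (Ext)

variable {R : Type} [Ring R] {L M N : ModCat R}

lemma MemAddMod.of_sum_eq_id {ι : Type*} [Fintype ι] (g : ι → (N ⟶ M)) (h : ι → (M ⟶ N))
    (hgh : ∑ i, g i ≫ h i = 𝟙 N) : MemAddMod N M := by
  let e := Fintype.equivFin ι
  refine ⟨_, biproduct.lift fun i ↦ g (e.symm i), biproduct.desc fun i ↦ h (e.symm i), ?_⟩
  rw [biproduct.lift_desc, ← hgh]
  exact e.symm.sum_comp fun i ↦ g i ≫ h i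

lemma MemAddMod.exists_sum_eq_id (hN : MemAddMod N M) :
    ∃ (k : ℕ) (g : Fin k → (N ⟶ M)) (h : Fin k → (M ⟶ N)), ∑ i, g i ≫ h i = 𝟙 N := by
  obtain ⟨k, g, h, hgh⟩ := hN
  let F : Fin k → ModCat R := fun _ ↦ M
  refine ⟨k, fun i ↦ g ≫ biproduct.π F i, fun i ↦ biproduct.ι F i ≫ h, ?_⟩
  calc ∑ i, (g ≫ biproduct.π F i) ≫ biproduct.ι F i ≫ h
      = g ≫ (∑ i, biproduct.π F i ≫ biproduct.ι F i) ≫ h := by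
        simp only [Preadditive.comp_sum, Preadditive.sum_comp, Category.assoc]
    _ = 𝟙 N := by rw [biproduct.total, Category.id_comp, hgh]

lemma MemAddMod.of_retract (r : Retract N M) : MemAddMod N M :=
  .of_sum_eq_id (ι := Unit) (fun _ ↦ r.i) (fun _ ↦ r.r) (by simp)

lemma MemAddMod.of_iso (e : N ≅ M) : MemAddMod N M := .of_retract (.ofIso e)

lemma MemAddMod.of_isZero (hN : IsZero N) : MemAddMod N M :=
  .of_sum_eq_id (ι := Empty) Empty.elim Empty.elim (hN.eq_of_src _ _)

lemma MemAddMod.trans (hN : MemAddMod N M) (hM : MemAddMod M L) : MemAddMod N L := by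
  obtain ⟨k, g, h, hgh⟩ := hN.exists_sum_eq_id
  obtain ⟨l, g', h', hgh'⟩ := hM.exists_sum_eq_id
  refine .of_sum_eq_id (ι := Fin k × Fin l) (fun i ↦ g i.1 ≫ g' i.2) (fun i ↦ h' i.2 ≫ h i.1) ?_
  calc ∑ i : Fin k × Fin l, (g i.1 ≫ g' i.2) ≫ h' i.2 ≫ h i.1
      = ∑ i, g i ≫ (∑ j, g' j ≫ h' j) ≫ h i := by
        simp only [Fintype.sum_prod_type, Preadditive.comp_sum, Preadditive.sum_comp,
          Category.assoc]
    _ = 𝟙 N := by simp only [hgh', Category.id_comp, hgh]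

lemma MemAddMod.biprod (hM : MemAddMod M L) (hN : MemAddMod N L) : MemAddMod (M ⊞ N) L := by
  obtain ⟨k, g, h, hgh⟩ := hM.exists_sum_eq_id
  obtain ⟨l, g', h', hgh'⟩ := hN.exists_sum_eq_id
  refine .of_sum_eq_id (ι := Fin k ⊕ Fin l)
    (Sum.elim (fun i ↦ biprod.fst ≫ g i) fun i ↦ biprod.snd ≫ g' i)
    (Sum.elim (fun i ↦ h i ≫ biprod.inl) fun i ↦ h' i ≫ biprod.inr) ?_
  calc _ = biprod.fst ≫ (∑ i, g i ≫ h i) ≫ biprod.inl +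
        biprod.snd ≫ (∑ i, g' i ≫ h' i) ≫ biprod.inr := by
        simp only [Fintype.sum_sum_type, Sum.elim_inl, Sum.elim_inr, Preadditive.comp_sum,
          Preadditive.sum_comp, Category.assoc]
    _ = 𝟙 (M ⊞ N) := by rw [hgh, hgh', Category.id_comp, Category.id_comp, biprod.total]

lemma MemAddMod.biproduct (k : ℕ) : MemAddMod (⨁ fun _ : Fin k ↦ M) M :=
  ⟨k, 𝟙 _, 𝟙 _, Category.id_comp _⟩

lemma MemAddMod.isGeneratedBy (hN : MemAddMod N M) : IsGeneratedBy N M := by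
  obtain ⟨k, g, h, hgh⟩ := hN.exists_sum_eq_id
  refine ⟨k, h, fun Z u hu ↦ ?_⟩
  rw [← Category.id_comp u, ← hgh, Preadditive.sum_comp]
  exact Finset.sum_eq_zero fun i _ ↦ by rw [Category.assoc, hu, comp_zero]

lemma isFGMod_iff_isGeneratedBy : IsFGMod M ↔ IsGeneratedBy M (.of R R) := by
  constructor
  · intro h
    have : Module.Finite R M := h
    obtain ⟨k, s, hs⟩ := Module.Finite.exists_fin (R := R) (M := M)
    refine ⟨k, fun i ↦ ModuleCat.ofHom (LinearMap.toSpanSingleton R M (s i)), fun Z u hu ↦ ?_⟩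
    refine ModuleCat.hom_ext (LinearMap.ext_on_range hs fun i ↦ ?_)
    simpa using ConcreteCategory.congr_hom (hu i) (1 : R)
  · rintro ⟨k, f, hf⟩
    let S : Submodule R M := Submodule.span R (Set.range fun i ↦ f i (1 : R))
    have hS : ModuleCat.ofHom S.mkQ = 0 := by
      refine hf _ fun i ↦ ModuleCat.hom_ext (LinearMap.ext_ring ?_)
      exact (Submodule.Quotient.mk_eq_zero S).2 (Submodule.subset_span ⟨i, rfl⟩)
    have hS : S = ⊤ := by
      rw [← S.ker_mkQ, LinearMap.ker_eq_top]
      exact congrArg ModuleCat.Hom.hom hS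
    exact .of_fg_top (hS ▸ Submodule.fg_span (Set.finite_range _))

lemma IsGeneratedBy.isFGMod (h : IsGeneratedBy N M) (hM : IsFGMod M) : IsFGMod N :=
  isFGMod_iff_isGeneratedBy.2 (h.trans (isFGMod_iff_isGeneratedBy.1 hM))

lemma MemAddMod.isFGMod (h : MemAddMod N M) (hM : IsFGMod M) : IsFGMod N :=
  h.isGeneratedBy.isFGMod hM

lemma IsFGMod.of_mono [IsNoetherianRing R] (hM : IsFGMod M) (f : N ⟶ M) [Mono f] : IsFGMod N :=
  have : Module.Finite R M := hM
  Module.Finite.of_injective f.hom ((ModuleCat.mono_iff_injective f).1 ‹_›)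

lemma MemAddMod.subsingleton_ext_left {n : ℕ} (hN : MemAddMod N M)
    (h : Subsingleton (Ext M L n)) : Subsingleton (Ext N L n) := by
  obtain ⟨k, g, f, hgf⟩ := hN.exists_sum_eq_id
  refine subsingleton_of_forall_eq 0 fun x ↦ ?_
  calc x = ∑ i, (Ext.mk₀ (g i)).comp ((Ext.mk₀ (f i)).comp x (zero_add n)) (zero_add n) := by
        conv_lhs => rw [← Ext.mk₀_id_comp x, ← hgf, Ext.mk₀_sum, Ext.sum_comp]
        simp only [Ext.mk₀_comp_mk₀_assoc]
    _ = 0 := Finset.sum_eq_zero fun i _ ↦ by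
        rw [Subsingleton.elim ((Ext.mk₀ (f i)).comp x (zero_add n)) 0, Ext.comp_zero]

lemma MemAddMod.subsingleton_ext_right {n : ℕ} (hN : MemAddMod N M)
    (h : Subsingleton (Ext L M n)) : Subsingleton (Ext L N n) := by
  obtain ⟨k, g, f, hgf⟩ := hN.exists_sum_eq_id
  refine subsingleton_of_forall_eq 0 fun x ↦ ?_
  calc x = ∑ i, (x.comp (Ext.mk₀ (g i)) (add_zero n)).comp (Ext.mk₀ (f i)) (add_zero n) := by
        conv_lhs => rw [← Ext.comp_mk₀_id x, ← hgf, Ext.mk₀_sum, Ext.comp_sum]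
        simp
    _ = 0 := Finset.sum_eq_zero fun i _ ↦ by
        rw [Subsingleton.elim (x.comp (Ext.mk₀ (g i)) (add_zero n)) 0, Ext.zero_comp]

lemma MemAddMod.hasProjectiveDimensionLT {n : ℕ} (hN : MemAddMod N M)
    [HasProjectiveDimensionLT M n] : HasProjectiveDimensionLT N n :=
  (hasProjectiveDimensionLT_iff N n).2 fun i hi Y e ↦
    (hN.subsingleton_ext_left (HasProjectiveDimensionLT.subsingleton M n i hi Y)).elim e 0

end AddClosure

section Extensions

open Abelian (Ext)

attribute [local instance] Abelian.hasFiniteBiproducts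

variable {C : Type u} [Category.{v} C] [Abelian C] [HasExt.{w} C]

lemma subsingleton_ext_biproduct {ι : Type} [Finite ι] {X : C} {Y : ι → C} {n : ℕ}
    [∀ i, Subsingleton (Ext X (Y i) n)] : Subsingleton (Ext X (⨁ Y) n) := by
  have := Fintype.ofFinite ι
  exact (Ext.addEquivBiproduct X (biproduct.isBilimit Y) n).subsingleton

section LongExactSequence

variable {S : ShortComplex C} (hS : S.ShortExact) {X Y : C}
include hS

lemma subsingleton_ext_X₂ (n : ℕ) [Subsingleton (Ext S.X₁ Y n)] [Subsingleton (Ext S.X₃ Y n)] :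
    Subsingleton (Ext S.X₂ Y n) := by
  refine subsingleton_of_forall_eq 0 fun x ↦ ?_
  obtain ⟨y, rfl⟩ := Ext.contravariant_sequence_exact₂ hS Y x (Subsingleton.elim _ _)
  rw [Subsingleton.elim y 0, Ext.comp_zero]

lemma exists_extension_of_subsingleton_ext [Subsingleton (Ext S.X₃ Y 1)] (h : S.X₁ ⟶ Y) :
    ∃ k : S.X₂ ⟶ Y, S.f ≫ k = h := by
  obtain ⟨x, hx⟩ := Ext.contravariant_sequence_exact₁ hS Y (Ext.mk₀ h) (add_zero 1)
    (Subsingleton.elim _ _)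
  obtain ⟨k, rfl⟩ := (Ext.mk₀_bijective _ _).2 x
  exact ⟨k, (Ext.mk₀_bijective _ _).1 (by rw [← hx, Ext.mk₀_comp_mk₀])⟩

lemma exists_lift_of_subsingleton_ext [Subsingleton (Ext X S.X₁ 1)] (h : X ⟶ S.X₃) :
    ∃ k : X ⟶ S.X₂, k ≫ S.g = h := by
  obtain ⟨x, hx⟩ := Ext.covariant_sequence_exact₃ X hS (Ext.mk₀ h) (zero_add 1)
    (Subsingleton.elim _ _)
  obtain ⟨k, rfl⟩ := (Ext.mk₀_bijective _ _).2 x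
  exact ⟨k, (Ext.mk₀_bijective _ _).1 (by rw [← hx, Ext.mk₀_comp_mk₀])⟩

lemma subsingleton_ext_of_exists_extension [Projective S.X₂]
    (H : ∀ h : S.X₁ ⟶ Y, ∃ k : S.X₂ ⟶ Y, S.f ≫ k = h) : Subsingleton (Ext S.X₃ Y 1) := by
  refine subsingleton_of_forall_eq 0 fun x ↦ ?_
  obtain ⟨y, rfl⟩ := Ext.contravariant_sequence_exact₃ hS Y x (Ext.eq_zero_of_projective _)
    (add_zero 1)
  obtain ⟨h, rfl⟩ := (Ext.mk₀_bijective _ _).2 y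
  obtain ⟨k, rfl⟩ := H h
  rw [← Ext.mk₀_comp_mk₀, hS.extClass_comp_assoc]

lemma subsingleton_ext_of_exists_lift [Subsingleton (Ext X S.X₂ 1)]
    (H : ∀ h : X ⟶ S.X₃, ∃ k : X ⟶ S.X₂, k ≫ S.g = h) : Subsingleton (Ext X S.X₁ 1) := by
  refine subsingleton_of_forall_eq 0 fun x ↦ ?_
  obtain ⟨y, rfl⟩ := Ext.covariant_sequence_exact₁ X hS x (Subsingleton.elim _ _) (zero_add 1)
  obtain ⟨h, rfl⟩ := (Ext.mk₀_bijective _ _).2 y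
  obtain ⟨k, rfl⟩ := H h
  rw [← Ext.mk₀_comp_mk₀, Ext.comp_assoc_of_second_deg_zero, hS.comp_extClass, Ext.comp_zero]

end LongExactSequence

lemma exists_shortExact_pushout {S : ShortComplex C} (hS : S.ShortExact) {Y : C}
    (f : S.X₁ ⟶ Y) :
    ∃ (Z : C) (i : Y ⟶ Z) (p : Z ⟶ S.X₃) (w : i ≫ p = 0) (h : (ShortComplex.mk i p w).ShortExact),
      h.extClass = hS.extClass.comp (Ext.mk₀ f) (add_zero 1) := by
  have := hS.mono_f
  have := hS.epi_g
  let p : pushout f S.f ⟶ S.X₃ := pushout.desc 0 S.g (by simp)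
  have hp : pushout.inr f S.f ≫ p = S.g := pushout.inr_desc _ _ _
  have : Epi p := epi_of_epi_fac hp
  have w : pushout.inl f S.f ≫ p = 0 := pushout.inl_desc _ _ _
  have exact : (ShortComplex.mk _ p w).Exact := by
    refine ShortComplex.exact_of_g_is_cokernel _ <| CokernelCofork.IsColimit.ofπ' _ _ fun u hu ↦ ?_
    have hu' : S.f ≫ pushout.inr f S.f ≫ u = 0 := by
      rw [← pushout.condition_assoc, hu, comp_zero]
    obtain ⟨d, hd⟩ := CokernelCofork.IsColimit.desc' hS.gIsCokernel _ hu'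
    refine ⟨d, pushout.hom_ext ?_ ?_⟩
    · simpa [reassoc_of% w] using hu.symm
    · simpa [reassoc_of% hp] using hd
  have short : (ShortComplex.mk _ p w).ShortExact := { exact }
  let φ : S ⟶ ShortComplex.mk _ p w :=
    { τ₁ := f, τ₂ := pushout.inr f S.f, τ₃ := 𝟙 _, comm₁₂ := pushout.condition (f := f),
      comm₂₃ := by simp [hp] }
  refine ⟨_, _, p, w, short, ?_⟩
  simpa [φ] using (ShortComplex.ShortExact.extClass_naturality hS short φ).symm

lemma exists_shortExact_extClass_eq [EnoughProjectives C] {X Y : C} (e : Ext X Y 1) :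
    ∃ (Z : C) (i : Y ⟶ Z) (p : Z ⟶ X) (w : i ≫ p = 0) (h : (ShortComplex.mk i p w).ShortExact),
      h.extClass = e := by
  let π := Projective.π X
  have hS : (ShortComplex.mk (kernel.ι π) π (kernel.condition π)).ShortExact :=
    { exact := ShortComplex.exact_of_f_is_kernel _ (kernelIsKernel π) }
  obtain ⟨f, hf⟩ := Ext.contravariant_sequence_exact₃ hS Y e
    (Ext.eq_zero_of_projective _) (add_zero 1)
  obtain ⟨f, rfl⟩ := Ext.mk₀_bijective _ _ |>.2 f
  obtain ⟨Z, i, p, w, h, hh⟩ := exists_shortExact_pushout hS f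
  exact ⟨Z, i, p, w, h, hh.trans hf⟩

lemma exists_universal_extension [EnoughProjectives C] (K : Type*) [CommRing K] [Linear K C]
    (X Y : C) [Module.Finite K (Ext X Y 1)] [Subsingleton (Ext X X 1)] :
    ∃ (m : ℕ) (Z : C) (i : Y ⟶ Z) (p : Z ⟶ ⨁ fun _ : Fin m ↦ X) (w : i ≫ p = 0),
      (ShortComplex.mk i p w).ShortExact ∧ Subsingleton (Ext X Z 1) := by
  obtain ⟨m, s, hs⟩ := Module.Finite.exists_fin (R := K) (M := Ext X Y 1)
  let F : Fin m → C := fun _ ↦ X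
  let E := Ext.biproductAddEquiv (biproduct.isBilimit F) Y 1
  obtain ⟨Z, i, p, w, h, hE⟩ := exists_shortExact_extClass_eq (E.symm s)
  refine ⟨m, Z, i, p, w, h, subsingleton_of_forall_eq 0 fun x ↦ ?_⟩
  have hF : Subsingleton (Ext X (⨁ F) 1) := subsingleton_ext_biproduct
  have spanning_classes_die (j) : (s j).comp (Ext.mk₀ i) (add_zero 1) = 0 := by
    have hj : (Ext.mk₀ (biproduct.ι F j)).comp h.extClass (zero_add 1) = s j := by
      rw [hE]; exact congrFun (E.apply_symm_apply s) j
    rw [← hj, Ext.comp_assoc_of_third_deg_zero]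
    exact (congrArg (Ext.comp _ · _) h.extClass_comp).trans (Ext.comp_zero _ _ _ _ _)
  obtain ⟨y, rfl⟩ := Ext.covariant_sequence_exact₂ X h x (hF.elim _ _)
  change y.comp (Ext.mk₀ i) (add_zero 1) = 0
  induction (hs ▸ Submodule.mem_top : y ∈ Submodule.span K (Set.range s))
    using Submodule.span_induction with
  | mem _ hy => obtain ⟨j, rfl⟩ := hy; exact spanning_classes_die j
  | zero => exact Ext.zero_comp _ _ _ _ _
  | add y y' _ _ hy hy' => rw [Ext.add_comp, hy, hy', add_zero]
  | smul c y _ hy => rw [Ext.smul_comp, hy, smul_zero]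

end Extensions

section FiniteExt

open Abelian (Ext)

open scoped ModuleCat

variable (K : Type) [Field K] {R : Type} [Ring R] [Algebra K R] [Module.Finite K R]

lemma isFGMod_iff_finite_field {M : ModCat R} : IsFGMod M ↔ Module.Finite K M :=
  ⟨fun (_ : Module.Finite R M) ↦ .trans R M, fun _ ↦ Module.Finite.of_restrictScalars_finite K R M⟩

lemma IsFGMod.finite_hom {M N : ModCat R} (hM : IsFGMod M) (hN : IsFGMod N) :
    Module.Finite K (M ⟶ N) := by
  have := (isFGMod_iff_finite_field K).1 hM
  have := (isFGMod_iff_finite_field K).1 hN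
  have : Module.Finite K (M →ₗ[R] N) :=
    .of_injective (LinearMap.restrictScalarsₗ K R M N K) (LinearMap.restrictScalars_injective K)
  exact .equiv ModuleCat.homLinearEquiv.symm

lemma IsFGMod.finite_ext {M N : ModCat R} (hM : IsFGMod M) (hN : IsFGMod N) (n : ℕ) :
    Module.Finite K (Ext M N n) := by
  have : IsNoetherianRing R := isNoetherian_of_tower K inferInstance
  induction n generalizing M with
  | zero =>
    have := hM.finite_hom K hN
    exact .equiv Ext.linearEquiv₀.symm
  | succ n ih =>
    have : Module.Finite R M := hM
    obtain ⟨k, f, hf⟩ := Module.Finite.exists_fin' R M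
    have hS := LinearMap.shortExact_shortComplexKer hf
    have : Module.Finite K (Ext (.of R (LinearMap.ker f)) N n) :=
      ih (inferInstanceAs (Module.Finite R (LinearMap.ker f)))
    exact .of_surjective (hS.extClass.precompOfLinear K N (add_comm 1 n))
      (precomp_extClass_surjective_of_projective_X₂ N hS n)

include K in
/-- Right `add M`-approximations exist, and are epimorphisms onto modules generated by `M`. -/
lemma IsGeneratedBy.exists_epi_approximation {M N : ModCat R} (hM : IsFGMod M)
    (hN : IsGeneratedBy N M) :
    ∃ (k : ℕ) (p : (⨁ fun _ : Fin k ↦ M) ⟶ N), Epi p ∧ ∀ f : M ⟶ N, ∃ g, g ≫ p = f := by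
  have := hM.finite_hom K (hN.isFGMod hM)
  obtain ⟨k, s, hs⟩ := Module.Finite.exists_fin (R := K) (M := M ⟶ N)
  have factors (f : M ⟶ N) : ∃ g, g ≫ biproduct.desc s = f := by
    obtain ⟨c, rfl⟩ := (Submodule.mem_span_range_iff_exists_fun K).1
      (hs ▸ Submodule.mem_top : f ∈ Submodule.span K (Set.range s))
    exact ⟨biproduct.lift fun i ↦ c i • 𝟙 M, by simp [biproduct.lift_desc]⟩
  obtain ⟨l, f, hf⟩ := hN
  refine ⟨k, biproduct.desc s, Preadditive.epi_of_cancel_zero _ fun u hu ↦ hf u fun i ↦ ?_, factors⟩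
  obtain ⟨g, hg⟩ := factors (f i)
  rw [← hg, Category.assoc, hu, comp_zero]

end FiniteExt

section TauRigid

open Abelian (Ext)

variable {R : Type} [Ring R] {M N : ModCat R}

lemma IsTauRigidMod.subsingleton_ext_one (hM : IsTauRigidMod M) (hN : IsGeneratedBy N M) :
    Subsingleton (Ext M N 1) := by
  obtain ⟨P₁, P₀, f, g, _, _, -, -, hg, hfg, hext⟩ := hM
  obtain ⟨k, p, _⟩ := hN.exists_epi
  have extend_to_N (h : P₁ ⟶ N) : ∃ k : P₀ ⟶ N, f ≫ k = h := by
    choose e he using fun i ↦ hext (Projective.factorThru h p ≫ biproduct.π _ i)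
    refine ⟨biproduct.lift e ≫ p, ?_⟩
    rw [← Category.assoc, ← Projective.factorThru_comp h p]
    congr 1
    ext1 i
    simp [he]
  have hS := LinearMap.shortExact_shortComplexKer (f := g.hom) hg
  let c : P₁ ⟶ .of R (LinearMap.ker g.hom) :=
    ModuleCat.ofHom (f.hom.codRestrict _ fun x ↦ hfg.apply_apply_eq_zero x)
  have : Epi c := (ModuleCat.epi_iff_surjective c).2 fun ⟨y, hy⟩ ↦
    ((hfg y).1 hy).imp fun x hx ↦ Subtype.ext hx
  have : Projective g.hom.shortComplexKer.X₂ := ‹Projective P₀›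
  refine subsingleton_ext_of_exists_extension hS fun h ↦ ?_
  obtain ⟨e, he⟩ := extend_to_N (c ≫ h)
  exact ⟨e, (cancel_epi c).1 he⟩

lemma isTauRigidMod_of_subsingleton_ext [IsNoetherianRing R] (hM : IsFGMod M)
    [HasProjectiveDimensionLE M 1] [Subsingleton (Ext M M 1)] : IsTauRigidMod M := by
  have : Module.Finite R M := hM
  obtain ⟨k, f, hf⟩ := Module.Finite.exists_fin' R M
  have hS := LinearMap.shortExact_shortComplexKer hf
  refine ⟨_, _, f.shortComplexKer.f, f.shortComplexKer.g, ?_, inferInstance, ?_, ?_, hf, ?_, ?_⟩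
  · exact projective_iff_hasProjectiveDimensionLT_one.2
      (hS.hasProjectiveDimensionLT_X₁ 1 inferInstance ‹_›)
  · exact inferInstanceAs (Module.Finite R (LinearMap.ker f))
  · exact inferInstanceAs (Module.Finite R (Fin k → R))
  · exact (ShortComplex.ShortExact.moduleCat_exact_iff_function_exact _).1 hS.exact
  · have : Subsingleton (Ext f.shortComplexKer.X₃ M 1) := ‹Subsingleton (Ext M M 1)›
    exact fun h ↦ exists_extension_of_subsingleton_ext hS h

end TauRigid

section Tilting

open Abelian (Ext)

variable {R : Type} [Ring R]

/-- `T` is a (classical) tilting module: finitely generated of projective dimension at most one,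
without self-extensions, and `R` has a coresolution of length one by modules in `add T`. -/
structure IsTilting (T : ModCat R) : Prop where
  isFGMod : IsFGMod T
  hasProjectiveDimensionLE_one : HasProjectiveDimensionLE T 1
  subsingleton_ext_one : Subsingleton (Ext T T 1)
  exists_coresolution : ∃ (T₀ T₁ : ModCat R) (i : .of R R ⟶ T₀) (p : T₀ ⟶ T₁) (w : i ≫ p = 0),
    (ShortComplex.mk i p w).ShortExact ∧ MemAddMod T₀ T ∧ MemAddMod T₁ T

namespace IsTilting

variable {T T' N : ModCat R}

lemma of_memAddMod (hT : IsTilting T) (h : MemAddMod T' T) (h' : MemAddMod T T') :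
    IsTilting T' where
  isFGMod := h.isFGMod hT.isFGMod
  hasProjectiveDimensionLE_one :=
    have := hT.hasProjectiveDimensionLE_one
    h.hasProjectiveDimensionLT
  subsingleton_ext_one :=
    h.subsingleton_ext_left (h.subsingleton_ext_right hT.subsingleton_ext_one)
  exists_coresolution := by
    obtain ⟨T₀, T₁, i, p, w, hS, h₀, h₁⟩ := hT.exists_coresolution
    exact ⟨T₀, T₁, i, p, w, hS, h₀.trans h', h₁.trans h'⟩

lemma isGeneratedBy (hT : IsTilting T) (hN : IsFGMod N) [h : Subsingleton (Ext T N 1)] :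
    IsGeneratedBy N T := by
  obtain ⟨T₀, T₁, i, p, w, hS, h₀, h₁⟩ := hT.exists_coresolution
  obtain ⟨k, f, hf⟩ := isFGMod_iff_isGeneratedBy.1 hN
  have : Subsingleton (Ext T₁ N 1) := h₁.subsingleton_ext_left h
  choose g hg using fun j ↦ exists_extension_of_subsingleton_ext hS (f j)
  refine IsGeneratedBy.trans ⟨k, g, fun Z u hu ↦ hf u fun j ↦ ?_⟩ h₀.isGeneratedBy
  rw [← hg, Category.assoc, hu, comp_zero]

lemma isZero_of_forall_eq_zero (hT : IsTilting T) {Q : ModCat R} (hQ : IsFGMod Q) [Projective Q]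
    (h : ∀ f : Q ⟶ T, f = 0) : IsZero Q := by
  obtain ⟨T₀, T₁, i, p, w, hS, ⟨k, g, g', hg⟩, -⟩ := hT.exists_coresolution
  have : Mono i := hS.mono_f
  have : Mono g := mono_of_mono_fac hg
  have hom_regular_eq_zero (f : Q ⟶ .of R R) : f = 0 := by
    rw [← cancel_mono i, ← cancel_mono g, zero_comp, zero_comp]
    exact biproduct.hom_ext _ _ fun j ↦ (h _).trans (h _).symm
  obtain ⟨l, q, _⟩ := (isFGMod_iff_isGeneratedBy.1 hQ).exists_epi
  have : Projective.factorThru (𝟙 Q) q = 0 :=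
    biproduct.hom_ext _ _ fun j ↦ (hom_regular_eq_zero _).trans (hom_regular_eq_zero _).symm
  rw [IsZero.iff_id_eq_zero, ← Projective.factorThru_comp (𝟙 Q) q, this, zero_comp]

variable (K : Type) [Field K] [Algebra K R] [Module.Finite K R]

include K in
lemma memAddMod_of_isTauRigidMod (hT : IsTilting T) (hN : IsFGMod N)
    (h : IsTauRigidMod (T ⊞ N)) : MemAddMod N T := by
  have : IsNoetherianRing R := isNoetherian_of_tower K inferInstance
  have mem_T : MemAddMod T (T ⊞ N) := .of_retract (.mk biprod.inl biprod.fst)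
  have mem_N : MemAddMod N (T ⊞ N) := .of_retract (.mk biprod.inr biprod.snd)
  have : Subsingleton (Ext T N 1) :=
    mem_T.subsingleton_ext_left (h.subsingleton_ext_one mem_N.isGeneratedBy)
  have := hT.subsingleton_ext_one
  obtain ⟨k, p, _, approximation⟩ := (hT.isGeneratedBy hN).exists_epi_approximation K hT.isFGMod
  have hS : (ShortComplex.mk (kernel.ι p) p (kernel.condition p)).ShortExact :=
    { exact := ShortComplex.exact_of_f_is_kernel _ (kernelIsKernel p) }
  have : Subsingleton (Ext T (kernel p) 1) :=
    have := subsingleton_ext_biproduct (X := T) (Y := fun _ : Fin k ↦ T) (n := 1)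
    subsingleton_ext_of_exists_lift hS approximation
  have kernel_fg : IsFGMod (kernel p) :=
    ((MemAddMod.biproduct k).isFGMod hT.isFGMod).of_mono (kernel.ι p)
  have : Subsingleton (Ext N (kernel p) 1) := mem_N.subsingleton_ext_left
    (h.subsingleton_ext_one ((hT.isGeneratedBy kernel_fg).trans mem_T.isGeneratedBy))
  obtain ⟨s, hs⟩ := exists_lift_of_subsingleton_ext hS (𝟙 N)
  exact ⟨k, s, p, hs⟩

include K in
lemma isSupportTauTiltingMod (hT : IsTilting T) : IsSupportTauTiltingMod T := by
  have : IsNoetherianRing R := isNoetherian_of_tower K inferInstance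
  have := hT.hasProjectiveDimensionLE_one
  have := hT.subsingleton_ext_one
  have zero : IsZero (ModuleCat.of R PUnit) := ModuleCat.isZero_of_subsingleton _
  refine ⟨.of R PUnit, ⟨hT.isFGMod, isTauRigidMod_of_subsingleton_ext hT.isFGMod,
    inferInstanceAs (Module.Finite R PUnit), inferInstance, fun f ↦ zero.eq_of_src _ _⟩,
    fun N Q ⟨fg, rigid, fg', proj, hom⟩ ↦ ⟨?_, ?_⟩⟩
  · refine hT.memAddMod_of_isTauRigidMod K (IsGeneratedBy.isFGMod ?_ fg) rigid
    exact (MemAddMod.of_retract (.mk biprod.inr biprod.snd)).isGeneratedBy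
  · have r : Retract Q (.of R PUnit ⊞ Q) := .mk biprod.inr biprod.snd
    have : Projective Q := r.projective
    have fg_Q : IsFGMod Q := (MemAddMod.of_retract r).isFGMod fg'
    refine .of_isZero (hT.isZero_of_forall_eq_zero fg_Q fun f ↦ ?_)
    have := hom (biprod.snd ≫ f ≫ biprod.inl)
    simpa using biprod.inr ≫= this =≫ biprod.fst

end IsTilting

end Tilting

section FiniteLength

variable {R : Type} [Ring R]

lemma isFGMod_X₂ {S : ShortComplex (ModCat R)} (hS : S.ShortExact) (h₁ : IsFGMod S.X₁)
    (h₃ : IsFGMod S.X₃) : IsFGMod S.X₂ :=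
  have : Module.Finite R S.X₁ := h₁
  have : Module.Finite R S.X₃ := h₃
  .of_exact ((ShortComplex.ShortExact.moduleCat_exact_iff_function_exact S).1 hS.exact)
    hS.moduleCat_surjective_g

lemma length_biprod (M N : ModCat R) :
    Module.length R ↑(M ⊞ N) = Module.length R M + Module.length R N := by
  have hS := (ShortComplex.Splitting.ofHasBinaryBiproduct M N).shortExact
  exact Module.length_eq_add_of_exact _ _ hS.moduleCat_injective_f hS.moduleCat_surjective_g
    ((ShortComplex.ShortExact.moduleCat_exact_iff_function_exact _).1 hS.exact)

lemma exists_isBasicMod [IsArtinianRing R] {M : ModCat R} (hM : IsFGMod M) :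
    ∃ M' : ModCat R, IsBasicMod M' ∧ MemAddMod M' M ∧ MemAddMod M M' := by
  induction h : Module.length R M using WellFoundedLT.induction generalizing M with | _ d ih
  by_cases basic : IsBasicMod M
  · exact ⟨M, basic, .of_iso (.refl M), .of_iso (.refl M)⟩
  simp only [IsBasicMod, not_forall] at basic
  obtain ⟨N, X, ⟨e⟩, hN⟩ := basic
  have mem_N : MemAddMod N (N ⊞ X) := .of_retract (.mk biprod.inl biprod.fst)
  have mem_X : MemAddMod X (N ⊞ X) := .of_retract (.mk biprod.inr biprod.snd)
  have M_mem : MemAddMod M (N ⊞ X) := (MemAddMod.of_iso e).trans ((mem_N.biprod mem_N).biprod mem_X)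
  have mem_M : MemAddMod (N ⊞ X) M := .trans (.biprod
    (.of_retract (.mk (biprod.inl ≫ biprod.inl) (biprod.fst ≫ biprod.fst)))
    (.of_retract (.mk biprod.inr biprod.snd))) (.of_iso e.symm)
  have smaller : Module.length R ↑(N ⊞ X) < Module.length R M := by
    have : Module.Finite R M := hM
    have : Nontrivial N := not_subsingleton_iff_nontrivial.1
      fun _ ↦ hN (ModuleCat.isZero_of_subsingleton N)
    have finite : Module.length R M ≠ ⊤ := Module.length_ne_top
    have length_M : Module.length R M = Module.length R N + Module.length R ↑(N ⊞ X) := by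
      rw [e.toLinearEquiv.length_eq, length_biprod, length_biprod N N, length_biprod N X, add_assoc]
    rw [length_M] at finite ⊢
    exact ENat.lt_add_left (WithTop.add_ne_top.1 finite).2 Module.length_pos
  obtain ⟨M', basic, mem, mem'⟩ := ih _ (h ▸ smaller) (mem_M.isFGMod hM) rfl
  exact ⟨M', basic, mem.trans mem_M, M_mem.trans mem'⟩

end FiniteLength

section Bongartz

open Abelian (Ext)

open scoped ModuleCat

variable (K : Type) [Field K] {R : Type} [Ring R] [Algebra K R] [Module.Finite K R]

include K in
/-- Bongartz's completion of a partial tilting module `X`. -/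
lemma exists_isTilting_biprod {X : ModCat R} (hX : IsFGMod X) [HasProjectiveDimensionLE X 1]
    [Subsingleton (Ext X X 1)] : ∃ U : ModCat R, IsTilting (U ⊞ X) := by
  have fg_R : IsFGMod (.of R R) := Module.Finite.self R
  have := hX.finite_ext K fg_R 1
  obtain ⟨m, U, i, p, w, hS, hXU⟩ := exists_universal_extension K X (.of R R)
  have add_X := MemAddMod.biproduct (M := X) m
  have : HasProjectiveDimensionLE (⨁ fun _ : Fin m ↦ X) 1 := add_X.hasProjectiveDimensionLT
  have : HasProjectiveDimensionLE U 1 :=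
    hS.hasProjectiveDimensionLT_X₂ 2 (inferInstanceAs (HasProjectiveDimensionLT _ (1 + 1))) this
  have ext_U (Y : ModCat R) (_ : Subsingleton (Ext X Y 1)) : Subsingleton (Ext U Y 1) :=
    have := add_X.subsingleton_ext_left ‹Subsingleton (Ext X Y 1)›
    have : Subsingleton (Ext (.of R R) Y 1) :=
      HasProjectiveDimensionLT.subsingleton _ 1 1 le_rfl Y
    subsingleton_ext_X₂ hS 1
  have mem_U : MemAddMod U (U ⊞ X) := .of_retract (.mk biprod.inl biprod.fst)
  have mem_X : MemAddMod X (U ⊞ X) := .of_retract (.mk biprod.inr biprod.snd)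
  refine ⟨U, ?_, inferInstanceAs (HasProjectiveDimensionLT _ 2), ?_,
    U, _, i, p, w, hS, mem_U, add_X.trans mem_X⟩
  · exact isFGMod_X₂ (ShortComplex.Splitting.ofHasBinaryBiproduct U X).shortExact
      (isFGMod_X₂ hS fg_R (add_X.isFGMod hX)) hX
  · have ext_X : Subsingleton (Ext X (U ⊞ X) 1) := Ext.addEquivBiprod.subsingleton
    have := ext_U _ ext_X
    exact Ext.biprodAddEquiv.subsingleton

include K in
theorem not_isTauTiltingFiniteRing_of_bricks (X : ℕ → ModCat R) (fg : ∀ m, IsFGMod (X m))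
    (pd : ∀ m, HasProjectiveDimensionLE (X m) 1) (ext : ∀ m, Subsingleton (Ext (X m) (X m) 1))
    (brick : ∀ m (f : X m ⟶ X m), f = 0 ∨ Mono f)
    (lt_finrank : ∀ m, m < Module.finrank K (X m)) :
    ¬ IsTauTiltingFiniteRing R := by
  rintro ⟨n, F, hF⟩
  have : IsArtinianRing R := isArtinian_of_tower K inferInstance
  have embeds (m : ℕ) : ∃ j, IsFGMod (F j) ∧ ∃ i : X m ⟶ F j, Mono i := by
    obtain ⟨U, hU⟩ := exists_isTilting_biprod K (fg m)
    obtain ⟨T, basic, mem, mem'⟩ := exists_isBasicMod hU.isFGMod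
    have hT := hU.of_memAddMod mem mem'
    obtain ⟨j, ⟨e⟩⟩ := hF T (hT.isSupportTauTiltingMod K) basic
    refine ⟨j, (MemAddMod.of_iso e.symm).isFGMod hT.isFGMod, ?_⟩
    have X_mem : MemAddMod (X m) (U ⊞ X m) := .of_retract (.mk biprod.inr biprod.snd)
    obtain ⟨k, g, h, hgh⟩ := ((X_mem.trans mem').trans (.of_iso e)).exists_sum_eq_id
    have nonzero : ¬ IsZero (X m) := fun h ↦
      have := ModuleCat.subsingleton_of_isZero h
      (lt_finrank m).ne_bot Module.finrank_zero_of_subsingleton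
    by_contra! no_mono
    refine nonzero ((IsZero.iff_id_eq_zero _).2 (hgh ▸ Finset.sum_eq_zero fun i _ ↦ ?_))
    exact (brick m _).resolve_right fun _ ↦ no_mono (g i) (mono_of_mono _ (h i))
  have bound (j : Fin n) : ∃ d, ∀ m, IsFGMod (F j) → (∃ i : X m ⟶ F j, Mono i) → m < d := by
    refine ⟨Module.finrank K (F j), fun m hj ⟨i, hi⟩ ↦ (lt_finrank m).trans_le ?_⟩
    have := (isFGMod_iff_finite_field K).1 hj
    exact LinearMap.finrank_le_finrank_of_injective (f := i.hom.restrictScalars K)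
      ((ModuleCat.mono_iff_injective i).1 hi)
  choose d hd using bound
  obtain ⟨j, fg_j, i, hi⟩ := embeds (∑ j, d j)
  exact (hd j _ fg_j ⟨i, hi⟩).not_ge
    (Finset.single_le_sum (fun _ _ ↦ Nat.zero_le _) (Finset.mem_univ j))

end Bongartz

/-! ### Filtered vector spaces as modules over the ladder -/

section Filtration

variable {K : Type u} [Field K] {I : Type v} {E : Type w} [AddCommGroup E] [Module K E]
  {E' : Type*} [AddCommGroup E'] [Module K E']

/-- The linear maps that respect two filtrations. -/
def filtrationHom (S : I → Submodule K E) (S' : I → Submodule K E') : Submodule K (E →ₗ[K] E') :=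
  ⨅ w, Submodule.compatibleMaps (S w) (S' w)

lemma mem_filtrationHom {S : I → Submodule K E} {S' : I → Submodule K E'} {f : E →ₗ[K] E'} :
    f ∈ filtrationHom S S' ↔ ∀ w, ∀ x ∈ S w, f x ∈ S' w :=
  Submodule.mem_iInf _

-- The dimension hypothesis says that the Euler form of the quotient with itself is at least `1`.
lemma filtrationHom_le_sup_of_finrank_le [FiniteDimensional K E]
    {S₁ S₀ : I → Submodule K E} (h : S₁ ≤ S₀)
    (brick : filtrationHom S₁ S₁ ⊓ filtrationHom S₀ S₀ ≤ K ∙ LinearMap.id)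
    (hdim : Module.finrank K (filtrationHom S₁ S₀) + 1 ≤
      Module.finrank K (filtrationHom S₁ S₁) + Module.finrank K (filtrationHom S₀ S₀)) :
    filtrationHom S₁ S₀ ≤ filtrationHom S₁ S₁ ⊔ filtrationHom S₀ S₀ := by
  have hsup : filtrationHom S₁ S₁ ⊔ filtrationHom S₀ S₀ ≤ filtrationHom S₁ S₀ := by
    refine sup_le (fun f hf ↦ ?_) (fun f hf ↦ ?_) <;> rw [mem_filtrationHom] at hf ⊢
    · exact fun w x hx ↦ h w (hf w x hx)
    · exact fun w x hx ↦ hf w x (h w hx)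
  have inf_le_one := (Submodule.finrank_mono brick).trans (finrank_span_le_card _)
  rw [Set.toFinset_singleton, Finset.card_singleton] at inf_le_one
  have := Submodule.finrank_sup_add_finrank_inf_eq (filtrationHom S₁ S₁) (filtrationHom S₀ S₀)
  exact (Submodule.eq_of_le_of_finrank_le hsup (by lia)).ge

variable [Preorder I] {κ : Type*} (b : Module.Basis κ K E) (d : κ → I)

/-- The filtration of a vector space in which the basis vector `b k` has degree `d k`. -/
def basisFiltration : I →o Submodule K E where
  toFun w := .span K (b '' {k | d k ≤ w})
  monotone' _ _ h := Submodule.span_mono (Set.image_mono fun _ hk ↦ le_trans hk h)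

variable {b d}

lemma basisFiltration_apply (w : I) : basisFiltration b d w = .span K (b '' {k | d k ≤ w}) :=
  rfl

lemma mem_basisFiltration {x : E} {w : I} :
    x ∈ basisFiltration b d w ↔ ∀ k, ¬ d k ≤ w → b.repr x k = 0 := by
  simp only [basisFiltration_apply, b.mem_span_image, Set.subset_def, Finset.mem_coe,
    Finsupp.mem_support_iff, Set.mem_ofPred_eq, not_imp_comm]

lemma mem_basisFiltration_const {p w : I} {x : E} :
    x ∈ basisFiltration b (fun _ ↦ p) w ↔ (¬ p ≤ w → x = 0) := by
  rw [mem_basisFiltration, forall_comm]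
  exact forall_congr' fun _ ↦ b.forall_coord_eq_zero_iff

lemma mem_basisFiltration_prod {E' : Type*} [AddCommGroup E'] [Module K E'] {κ' : Type*}
    {b' : Module.Basis κ' K E'} {d : κ → I} {d' : κ' → I} {w : I} {x : E × E'} :
    x ∈ basisFiltration (b.prod b') (Sum.elim d d') w ↔
      x.1 ∈ basisFiltration b d w ∧ x.2 ∈ basisFiltration b' d' w := by
  simp [mem_basisFiltration]

lemma basis_mem_basisFiltration {k : κ} {w : I} (hk : d k ≤ w) : b k ∈ basisFiltration b d w :=
  Submodule.subset_span (Set.mem_image_of_mem b hk)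

lemma basisFiltration_top [OrderTop I] : basisFiltration b d ⊤ = ⊤ := by
  simp [basisFiltration_apply, b.span_eq]

variable (b d) in
lemma basisFiltration_map (e : E ≃ₗ[K] E') (w : I) :
    basisFiltration (b.map e) d w = (basisFiltration b d w).map e.toLinearMap := by
  rw [basisFiltration_apply, basisFiltration_apply, Submodule.map_span, Set.image_image]
  exact congrArg _ (Set.image_congr fun _ _ ↦ b.map_apply e _)

lemma finrank_basisFiltration [Fintype κ] [DecidableLE I] (w : I) :
    Module.finrank K (basisFiltration b d w) = Fintype.card {k // d k ≤ w} := by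
  rw [← finrank_span_eq_card (b.linearIndependent.comp (Subtype.val : {k // d k ≤ w} → κ)
    Subtype.val_injective), Set.range_comp, Subtype.range_coe_subtype, basisFiltration_apply]

lemma mem_filtrationHom_basisFiltration {S' : I →o Submodule K E'} {f : E →ₗ[K] E'} :
    f ∈ filtrationHom (basisFiltration b d) S' ↔ ∀ k, f (b k) ∈ S' (d k) := by
  refine mem_filtrationHom.trans ⟨fun hf k ↦ hf _ _ (basis_mem_basisFiltration le_rfl),
    fun hf w ↦ Submodule.span_le (p := (S' w).comap f).2 ?_⟩
  rintro _ ⟨k, hk, rfl⟩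
  exact S'.monotone hk (hf k)

lemma finrank_filtrationHom [Fintype κ] [DecidableLE I] {κ' : Type*} [Fintype κ']
    {b' : Module.Basis κ' K E'} {d' : κ' → I} :
    Module.finrank K (filtrationHom (basisFiltration b d) (basisFiltration b' d')) =
      ∑ k, Fintype.card {k' // d' k' ≤ d k} := by
  have := b'.finiteDimensional_of_finite
  have mem {f : E →ₗ[K] E'} := mem_filtrationHom_basisFiltration (f := f) (b := b) (d := d)
    (S' := basisFiltration b' d')
  let e : filtrationHom (basisFiltration b d) (basisFiltration b' d') ≃ₗ[K]
      ∀ k, basisFiltration b' d' (d k) :=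
    { toFun f k := ⟨f.1 (b k), mem.1 f.2 k⟩
      map_add' _ _ := rfl
      map_smul' _ _ := rfl
      invFun y := ⟨b.constr K fun k ↦ y k, mem.2 fun k ↦ by simp only [b.constr_basis, (y k).2]⟩
      left_inv f := Subtype.ext (b.ext fun k ↦ b.constr_basis K _ k)
      right_inv y := funext fun k ↦ Subtype.ext (b.constr_basis K _ k) }
  simp only [e.finrank_eq, Module.finrank_pi_fintype, finrank_basisFiltration]

end Filtration

namespace CommLadder

section Filtration

variable {K : Type} [Field K] {n : ℕ} {E : Type} [AddCommGroup E] [Module K E]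

open scoped Matrix.Module in
instance : Module (CommLadder K n)ᵐᵒᵖ (Fin 2 × Fin n → E) :=
  Module.compHom _ ((Matrix.transposeRingEquiv (Fin 2 × Fin n) K).symm.toRingHom.comp
    (toMatrix (K := K) (n := n)).toRingHom.op)

lemma smul_apply (a : (CommLadder K n)ᵐᵒᵖ) (x : Fin 2 × Fin n → E) (w : Fin 2 × Fin n) :
    (a • x) w = ∑ z, toMatrix a.unop z w • x z :=
  rfl

instance : IsScalarTower K (CommLadder K n)ᵐᵒᵖ (Fin 2 × Fin n → E) where
  smul_assoc c a x := by
    ext w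
    simp [smul_apply, Finset.smul_sum, mul_smul]

variable {p q : Fin 2 × Fin n}

lemma op_unit_smul (hpq : p ≤ q) (x : Fin 2 × Fin n → E) :
    MulOpposite.op (unit K p q) • x = Pi.single q (x p) := by
  ext w
  simp [smul_apply, toMatrix_unit hpq, Matrix.single_apply, Pi.single_apply, ite_and, eq_comm]

lemma toMatrix_sum_smul_unit {v : Fin 2 × Fin n → K} (hv : ∀ w, ¬ p ≤ w → v w = 0) :
    toMatrix (∑ w, v w • unit K p w) = Matrix.vecMulVec (Pi.single p 1) v := by
  have smul_unit (w) : v w • toMatrix (unit K p w) = v w • Matrix.single p w 1 := by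
    by_cases hw : p ≤ w
    · rw [toMatrix_unit hw]
    · rw [hv w hw, zero_smul, zero_smul]
  ext q w
  simp [smul_unit, Matrix.sum_apply, Matrix.single_apply, Matrix.vecMulVec_apply, Pi.single_apply,
    ite_and, eq_comm]

/-- The representation of the ladder with the vector space `S w` at the vertex `w` and with
inclusions as structure maps. -/
def filtrationModule (S : Fin 2 × Fin n →o Submodule K E) :
    Submodule (CommLadder K n)ᵐᵒᵖ (Fin 2 × Fin n → E) where
  carrier := {x | ∀ w, x w ∈ S w}
  add_mem' hx hy w := add_mem (hx w) (hy w)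
  zero_mem' _ := zero_mem _
  smul_mem' a x hx w := by
    refine Submodule.sum_mem _ fun z _ ↦ ?_
    by_cases hzw : z ≤ w
    · exact Submodule.smul_mem _ _ (S.monotone hzw (hx z))
    · exact (toMatrix_of_not_le a.unop hzw ▸ zero_smul K (x z)) ▸ zero_mem _

variable {S : Fin 2 × Fin n →o Submodule K E}

lemma single_mem_filtrationModule {x : E} {w : Fin 2 × Fin n} (hx : x ∈ S w) :
    Pi.single w x ∈ filtrationModule S := by
  intro z
  rcases eq_or_ne z w with rfl | hz
  · rwa [Pi.single_eq_same]
  · rw [Pi.single_eq_of_ne hz]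
    exact zero_mem _

variable {E' : Type} [AddCommGroup E'] [Module K E'] {S' : Fin 2 × Fin n →o Submodule K E'}

/-- The morphism of representations given at each vertex by the same linear map. -/
def filtrationMap (f : filtrationHom S S') :
    filtrationModule S →ₗ[(CommLadder K n)ᵐᵒᵖ] filtrationModule S' where
  toFun x := ⟨fun w ↦ f.1 (x.1 w), fun w ↦ mem_filtrationHom.1 f.2 w _ (x.2 w)⟩
  map_add' x y := Subtype.ext (funext fun w ↦ f.1.map_add _ _)
  map_smul' a x := Subtype.ext (funext fun w ↦ by simp [smul_apply])

lemma exists_filtrationMap_eq [NeZero n] (hS : S ⊤ = ⊤)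
    (g : filtrationModule S →ₗ[(CommLadder K n)ᵐᵒᵖ] filtrationModule S') :
    ∃ f, filtrationMap f = g := by
  let f : E →ₗ[K] E' :=
    { toFun e := (g ⟨Pi.single ⊤ e, single_mem_filtrationModule (hS ▸ Submodule.mem_top)⟩).1 ⊤
      map_add' e e' := by
        rw [← Pi.add_apply, ← Submodule.coe_add, ← map_add]
        simp only [Pi.single_add, AddMemClass.mk_add_mk]
      map_smul' c e := by
        rw [RingHom.id_apply, ← Pi.smul_apply, ← Submodule.coe_smul_of_tower,
          ← g.map_smul_of_tower]
        simp only [Pi.single_smul, SetLike.mk_smul_of_tower_mk] }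
  have apply_eq (x : filtrationModule S) (w) : f (x.1 w) = (g x).1 w := by
    have hx : MulOpposite.op (unit K w ⊤) • x =
        ⟨Pi.single ⊤ (x.1 w), single_mem_filtrationModule (hS ▸ Submodule.mem_top)⟩ :=
      Subtype.ext (op_unit_smul le_top x.1)
    change (g ⟨_, _⟩).1 ⊤ = _
    rw [← hx, map_smul, Submodule.coe_smul, op_unit_smul le_top, Pi.single_eq_same]
  refine ⟨⟨f, mem_filtrationHom.2 fun w e he ↦ ?_⟩, LinearMap.ext fun x ↦
    Subtype.ext (funext (apply_eq x))⟩
  have := (g ⟨Pi.single w e, single_mem_filtrationModule he⟩).2 w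
  simpa only [← apply_eq, Pi.single_eq_same] using this

section Basis

variable {κ : Type} {b : Module.Basis κ K E} {d : κ → Fin 2 × Fin n}

lemma repr_eq_zero (x : filtrationModule (basisFiltration b d)) {k : κ} (w : Fin 2 × Fin n)
    (hw : ¬ d k ≤ w) : b.repr (x.1 w) k = 0 :=
  mem_basisFiltration.1 (x.2 w) k hw

variable (b d)

/-- The `k`-th coordinate on the module of a basis filtration, as a map to the regular module. -/
def filtrationCoord (k : κ) :
    filtrationModule (basisFiltration b d) →ₗ[(CommLadder K n)ᵐᵒᵖ] (CommLadder K n)ᵐᵒᵖ where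
  toFun x := .op (∑ w, b.repr (x.1 w) k • unit K (d k) w)
  map_add' x y := by
    simp [add_smul, Finset.sum_add_distrib]
  map_smul' a x := MulOpposite.unop_injective <| toMatrix_injective <| by
    rw [RingHom.id_apply, smul_eq_mul, MulOpposite.unop_mul, map_mul]
    simp only [MulOpposite.unop_op, toMatrix_sum_smul_unit (repr_eq_zero _), Matrix.vecMulVec_mul]
    congr 1
    ext w
    simp [smul_apply, Matrix.vecMul, dotProduct, mul_comm]

lemma filtrationCoord_smul_single (k : κ) (x : filtrationModule (basisFiltration b d)) (e : E) (w) :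
    (filtrationCoord b d k x • Pi.single (d k) e : _ → E) w = b.repr (x.1 w) k • e := by
  simp [filtrationCoord, smul_apply, toMatrix_sum_smul_unit (repr_eq_zero _),
    Matrix.vecMulVec_apply, Pi.single_apply]

variable [Finite κ]

lemma exists_split_epi_filtrationModule : ∃ (g : (κ → (CommLadder K n)ᵐᵒᵖ) →ₗ[(CommLadder K n)ᵐᵒᵖ]
    filtrationModule (basisFiltration b d)) (f : _ →ₗ[(CommLadder K n)ᵐᵒᵖ] _), g ∘ₗ f = .id := by
  have := Fintype.ofFinite κ
  refine ⟨Fintype.linearCombination _ fun k ↦ ⟨Pi.single (d k) (b k),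
      single_mem_filtrationModule (basis_mem_basisFiltration le_rfl)⟩,
    LinearMap.pi (filtrationCoord b d), LinearMap.ext fun x ↦ Subtype.ext (funext fun w ↦ ?_)⟩
  simp [Fintype.linearCombination_apply, filtrationCoord_smul_single, b.sum_repr]

instance : Module.Projective (CommLadder K n)ᵐᵒᵖ (filtrationModule (basisFiltration b d)) :=
  have ⟨g, f, h⟩ := exists_split_epi_filtrationModule b d
  .of_split f g h

instance : Module.Finite (CommLadder K n)ᵐᵒᵖ (filtrationModule (basisFiltration b d)) :=
  have ⟨g, _, h⟩ := exists_split_epi_filtrationModule b d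
  .of_surjective g (Function.LeftInverse.surjective (LinearMap.congr_fun h))

end Basis

end Filtration

section Quotient

open Abelian (Ext)

open scoped ModuleCat

variable {K : Type} [Field K] {n : ℕ} {E : Type} [AddCommGroup E] [Module K E]
  (S₁ S₀ : Fin 2 × Fin n →o Submodule K E)

/-- The quotient of the modules of two filtrations `S₁ ≤ S₀` of the same vector space. -/
def filtrationQuotient : ModCat (CommLadder K n)ᵐᵒᵖ :=
  .of _ (filtrationModule S₀ ⧸ (filtrationModule S₁).submoduleOf (filtrationModule S₀))

/-- The projection onto a filtration quotient. -/
def filtrationProj :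
    filtrationModule S₀ →ₗ[(CommLadder K n)ᵐᵒᵖ] filtrationQuotient S₁ S₀ :=
  Submodule.mkQ _

lemma filtrationProj_surjective : Function.Surjective (filtrationProj S₁ S₀) :=
  Submodule.mkQ_surjective _

variable {S₁ S₀}

lemma filtrationProj_eq_zero_iff {x : filtrationModule S₀} :
    filtrationProj S₁ S₀ x = 0 ↔ x.1 ∈ filtrationModule S₁ :=
  Submodule.Quotient.mk_eq_zero _

lemma filtrationModule_mono (h : S₁ ≤ S₀) : filtrationModule S₁ ≤ filtrationModule S₀ :=
  fun _ hx w ↦ h w (hx w)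

lemma exists_shortExact_filtrationQuotient (h : S₁ ≤ S₀) :
    ∃ w, (ShortComplex.mk (ModuleCat.ofHom (Submodule.inclusion (filtrationModule_mono h)))
      (ModuleCat.ofHom (filtrationProj S₁ S₀)) w).ShortExact := by
  have exact : Function.Exact (Submodule.inclusion (filtrationModule_mono h))
      (filtrationProj S₁ S₀) := fun x ↦
    filtrationProj_eq_zero_iff.trans ⟨fun hx ↦ ⟨⟨_, hx⟩, rfl⟩, fun ⟨y, hy⟩ ↦ hy ▸ y.2⟩
  refine ⟨ModuleCat.hom_ext exact.linearMap_comp_eq_zero, ?_⟩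
  exact @ShortComplex.ShortExact.mk _ _ _ _
    ((ShortComplex.ShortExact.moduleCat_exact_iff_function_exact _).2 exact)
    ((ModuleCat.mono_iff_injective _).2 (Submodule.inclusion_injective (filtrationModule_mono h)))
    ((ModuleCat.epi_iff_surjective _).2 (filtrationProj_surjective S₁ S₀))

lemma isFGMod_filtrationQuotient [Module.Finite (CommLadder K n)ᵐᵒᵖ (filtrationModule S₀)] :
    IsFGMod (filtrationQuotient S₁ S₀) :=
  Module.Finite.of_surjective _ (filtrationProj_surjective S₁ S₀)

lemma finrank_le_filtrationQuotient [Module.Finite (CommLadder K n)ᵐᵒᵖ (filtrationModule S₀)]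
    {w : Fin 2 × Fin n} (hw : S₁ w = ⊥) :
    Module.finrank K (S₀ w) ≤ Module.finrank K (filtrationQuotient S₁ S₀) := by
  have := (isFGMod_iff_finite_field K).1 (isFGMod_filtrationQuotient (S₁ := S₁) (S₀ := S₀))
  let f : S₀ w →ₗ[K] filtrationQuotient S₁ S₀ := (filtrationProj S₁ S₀).restrictScalars K ∘ₗ
    { toFun x := ⟨Pi.single w x.1, single_mem_filtrationModule x.2⟩
      map_add' _ _ := Subtype.ext (Pi.single_add w _ _)
      map_smul' _ _ := Subtype.ext (Pi.single_smul w _ _) }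
  refine LinearMap.finrank_le_finrank_of_injective (f := f) <| LinearMap.ker_eq_bot.1 <|
    LinearMap.ker_eq_bot'.2 fun x hx ↦ ?_
  have mem := filtrationProj_eq_zero_iff.1 hx w
  simpa [hw] using mem

lemma hasProjectiveDimensionLE_filtrationQuotient
    [Module.Projective (CommLadder K n)ᵐᵒᵖ (filtrationModule S₁)]
    [Module.Projective (CommLadder K n)ᵐᵒᵖ (filtrationModule S₀)] (h : S₁ ≤ S₀) :
    HasProjectiveDimensionLE (filtrationQuotient S₁ S₀) 1 :=
  (exists_shortExact_filtrationQuotient h).elim fun _ hS ↦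
    hS.hasProjectiveDimensionLT_X₃ 1 inferInstance inferInstance

variable [NeZero n]

lemma exists_filtrationProj_comp_filtrationMap_eq
    {S : Fin 2 × Fin n →o Submodule K E}
    [Module.Projective (CommLadder K n)ᵐᵒᵖ (filtrationModule S)] (htop : S ⊤ = ⊤)
    (g : filtrationModule S →ₗ[(CommLadder K n)ᵐᵒᵖ] filtrationQuotient S₁ S₀) :
    ∃ f : filtrationHom S S₀, filtrationProj S₁ S₀ ∘ₗ filtrationMap f = g := by
  obtain ⟨f, hf⟩ := Module.projective_lifting_property _ g (filtrationProj_surjective S₁ S₀)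
  obtain ⟨f, rfl⟩ := exists_filtrationMap_eq htop f
  exact ⟨f, hf⟩

variable [Module.Projective (CommLadder K n)ᵐᵒᵖ (filtrationModule S₀)]

lemma eq_zero_or_mono_of_filtrationQuotient (h : S₁ ≤ S₀) (htop : S₀ ⊤ = ⊤)
    (brick : filtrationHom S₁ S₁ ⊓ filtrationHom S₀ S₀ ≤ K ∙ LinearMap.id)
    (g : filtrationQuotient S₁ S₀ ⟶ filtrationQuotient S₁ S₀) : g = 0 ∨ Mono g := by
  obtain ⟨f, hf⟩ := exists_filtrationProj_comp_filtrationMap_eq htop (g.hom ∘ₗ filtrationProj S₁ S₀)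
  have lift (x) : filtrationProj S₁ S₀ (filtrationMap f x) = g (filtrationProj S₁ S₀ x) :=
    LinearMap.congr_fun hf x
  have f_mem : f.1 ∈ filtrationHom S₁ S₁ := mem_filtrationHom.2 fun w x hx ↦ by
    let y : filtrationModule S₀ := ⟨Pi.single w x, single_mem_filtrationModule (h w hx)⟩
    have hy : filtrationProj S₁ S₀ y = 0 :=
      filtrationProj_eq_zero_iff.2 (single_mem_filtrationModule hx)
    have := filtrationProj_eq_zero_iff.1 ((lift y).trans (by rw [hy, map_zero])) w
    simpa [filtrationMap, y] using this
  obtain ⟨c, hc⟩ := Submodule.mem_span_singleton.1 (brick ⟨f_mem, f.2⟩)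
  have g_eq (x) : g x = c • x := by
    obtain ⟨x, rfl⟩ := filtrationProj_surjective S₁ S₀ x
    rw [← lift, ← LinearMap.map_smul_of_tower]
    congr 1
    ext w
    simp [filtrationMap, ← hc]
  rcases eq_or_ne c 0 with rfl | hc
  · exact .inl (by ext x; simp [g_eq])
  · exact .inr ((ModuleCat.mono_iff_injective g).2 fun x y hxy ↦
      smul_right_injective _ hc (by simpa only [g_eq] using hxy))

lemma subsingleton_ext_filtrationQuotient
    [Module.Projective (CommLadder K n)ᵐᵒᵖ (filtrationModule S₁)] (h : S₁ ≤ S₀) (htop : S₁ ⊤ = ⊤)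
    (hsup : filtrationHom S₁ S₀ ≤ filtrationHom S₁ S₁ ⊔ filtrationHom S₀ S₀) :
    Subsingleton (Ext (filtrationQuotient S₁ S₀) (filtrationQuotient S₁ S₀) 1) := by
  obtain ⟨_, hS⟩ := exists_shortExact_filtrationQuotient h
  refine subsingleton_ext_of_exists_extension hS fun g ↦ ?_
  obtain ⟨f, hf⟩ := exists_filtrationProj_comp_filtrationMap_eq htop g.hom
  obtain ⟨f₁, hf₁, f₀, hf₀, hsum⟩ := Submodule.mem_sup.1 (hsup f.2)
  refine ⟨ModuleCat.ofHom (filtrationProj S₁ S₀ ∘ₗ filtrationMap ⟨f₀, hf₀⟩), ?_⟩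
  ext x
  refine Eq.trans (sub_eq_zero.1 ?_).symm (LinearMap.congr_fun hf x)
  change filtrationProj S₁ S₀ _ - filtrationProj S₁ S₀ _ = 0
  rw [← map_sub, filtrationProj_eq_zero_iff]
  intro w
  have mem : f.1 (x.1 w) - f₀ (x.1 w) ∈ S₁ w := by
    simpa [← hsum] using mem_filtrationHom.1 hf₁ w _ (x.2 w)
  exact mem

end Quotient

end CommLadder

/-! ### Bricks from representations of the Kronecker quiver -/

section Kronecker

variable {K : Type u} [Field K] {U : Type v} {V : Type w} [AddCommGroup U] [Module K U]
  [AddCommGroup V] [Module K V]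

/-- A pair of parallel linear maps, that is a representation of the Kronecker quiver, all of whose
endomorphisms are scalar. -/
def IsKroneckerBrick (F G : U →ₗ[K] V) : Prop :=
  ∀ (α : U →ₗ[K] U) (γ : V →ₗ[K] V), γ ∘ₗ F = F ∘ₗ α → γ ∘ₗ G = G ∘ₗ α →
    ∃ c : K, α = c • LinearMap.id ∧ γ = c • LinearMap.id

lemma eq_smul_one_of_shift_invariant {R : Type*} [Semiring R] {m : ℕ}
    {A : Matrix (Fin (m + 1)) (Fin (m + 1)) R}
    (shift : ∀ i j : Fin m, A i.succ j.succ = A i.castSucc j.castSucc)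
    (succ_zero : ∀ i : Fin m, A i.succ 0 = 0)
    (castSucc_last : ∀ i : Fin m, A i.castSucc (Fin.last m) = 0) : A = A 0 0 • 1 := by
  have diag (i) : A i i = A 0 0 := by
    induction i using Fin.induction with
    | zero => rfl
    | succ i ih => exact (shift i i).trans ih
  have upper (j) : ∀ i, j < i → A i j = 0 := by
    induction j using Fin.induction with
    | zero => exact fun i hi ↦ Fin.succ_pred i hi.ne' ▸ succ_zero _
    | succ j ih =>
      refine Fin.cases (fun hi ↦ absurd hi (Fin.not_lt_zero _)) fun i hi ↦ (shift i j).trans ?_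
      exact ih _ (Fin.castSucc_lt_castSucc_iff.2 (Fin.succ_lt_succ_iff.1 hi))
  have lower (j) : ∀ i, i < j → A i j = 0 := by
    induction j using Fin.reverseInduction with
    | last => exact fun i hi ↦ Fin.castSucc_castPred i hi.ne ▸ castSucc_last _
    | cast j ih =>
      refine Fin.lastCases (fun hi ↦ absurd hi (Fin.le_last _).not_gt) fun i hi ↦
        (shift i j).symm.trans ?_
      exact ih _ (Fin.succ_lt_succ_iff.2 (Fin.castSucc_lt_castSucc_iff.1 hi))
  ext i j
  rcases lt_trichotomy i j with h | rfl | h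
  · simp [lower j i h, h.ne]
  · simp [diag]
  · simp [upper j i h, h.ne']

variable (K) in
lemma isKroneckerBrick_extend_castSucc_succ (m : ℕ) :
    IsKroneckerBrick (Function.ExtendByZero.linearMap K (Fin.castSucc (n := m)))
      (Function.ExtendByZero.linearMap K Fin.succ) := by
  intro α γ hF hG
  set F := Function.ExtendByZero.linearMap K (Fin.castSucc (n := m))
  set G := Function.ExtendByZero.linearMap K (Fin.succ (n := m))
  have F_castSucc (x j) : F x (Fin.castSucc j) = x j :=
    (Fin.castSucc_injective m).extend_apply _ _ _
  have F_last (x) : F x (Fin.last m) = 0 := Function.extend_apply' _ _ _ (by simp)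
  have G_succ (x j) : G x (Fin.succ j) = x j := (Fin.succ_injective m).extend_apply _ _ _
  have G_zero (x) : G x 0 = 0 := Function.extend_apply' _ _ _ (by simp)
  have F_single (i) : F (Pi.single i 1) = Pi.single (Fin.castSucc i) 1 := by
    ext j
    cases j using Fin.lastCases <;> simp [F_castSucc, F_last, Pi.single_apply]
  have G_single (i) : G (Pi.single i 1) = Pi.single (Fin.succ i) 1 := by
    ext j
    cases j using Fin.cases <;> simp [G_succ, G_zero, Pi.single_apply]
  have hF' (i) : γ (Pi.single (Fin.castSucc i) 1) = F (α (Pi.single i 1)) := by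
    rw [← F_single]
    exact LinearMap.congr_fun hF _
  have hG' (i) : γ (Pi.single (Fin.succ i) 1) = G (α (Pi.single i 1)) := by
    rw [← G_single]
    exact LinearMap.congr_fun hG _
  have scalar := eq_smul_one_of_shift_invariant (A := .of fun i ↦ γ (Pi.single i 1))
    (by simp [hF', hG', F_castSucc, G_succ]) (by simp [hG', G_zero]) (by simp [hF', F_last])
  set c := γ (Pi.single 0 1) 0
  have hγ : γ = c • LinearMap.id := by
    ext i j
    simpa [Matrix.one_apply, Pi.single_apply, eq_comm] using congrFun₂ scalar i j
  refine ⟨c, LinearMap.ext fun x ↦ funext fun j ↦ ?_, hγ⟩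
  rw [← F_castSucc (α x), ← LinearMap.comp_apply, ← hF, hγ]
  simp [F_castSucc]

end Kronecker

section KroneckerFiltration

variable {K : Type u} [Field K] {I : Type v} [PartialOrder I] {U V : Type w} [AddCommGroup U]
  [Module K U] [AddCommGroup V] [Module K V] {κ κ' : Type*} (b : Module.Basis κ K U)
  (b' : Module.Basis κ' K V) (F G : U →ₗ[K] V) (v : Fin 2 × Fin 5 ↪o I)

/-- The coordinate change between the bases adapted to the two filtrations `kroneckerFiltration₀`
and `kroneckerFiltration₁`. -/
def kroneckerShear : (U × U × V) ≃ₗ[K] U × U × V where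
  toFun x := (x.1 - x.2.1, x.2.1, x.2.2 - F x.1 + F x.2.1 - G x.2.1)
  invFun x := (x.1 + x.2.1, x.2.1, x.2.2 + F x.1 + G x.2.1)
  map_add' x y := by ext <;> simp only [Prod.fst_add, Prod.snd_add, map_add] <;> abel
  map_smul' c x := by simp [smul_sub, smul_add]
  left_inv x := by ext <;> simp only [map_sub] <;> abel
  right_inv x := by ext <;> simp only [map_add] <;> abel

/-- The filtration of `U × U × V` whose three factors have degrees `(0, 1)`, `(1, 0)`, `(0, 2)`. -/
abbrev kroneckerFiltration₀ : I →o Submodule K (U × U × V) :=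
  basisFiltration (b.prod (b.prod b'))
    (Sum.elim (fun _ ↦ v (0, 1)) (Sum.elim (fun _ ↦ v (1, 0)) fun _ ↦ v (0, 2)))

/-- The filtration of `U × U × V` in which the images of the three factors under the shear
determined by `F` and `G` have degrees `(0, 4)`, `(1, 2)`, `(1, 3)`. -/
abbrev kroneckerFiltration₁ : I →o Submodule K (U × U × V) :=
  basisFiltration ((b.prod (b.prod b')).map (kroneckerShear F G))
    (Sum.elim (fun _ ↦ v (0, 4)) (Sum.elim (fun _ ↦ v (1, 2)) fun _ ↦ v (1, 3)))

variable {b b' F G v}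

lemma mem_kroneckerFiltration₀ {w : I} {x : U × U × V} :
    x ∈ kroneckerFiltration₀ b b' v w ↔ (¬ v (0, 1) ≤ w → x.1 = 0) ∧
      (¬ v (1, 0) ≤ w → x.2.1 = 0) ∧ (¬ v (0, 2) ≤ w → x.2.2 = 0) := by
  simp only [mem_basisFiltration_prod, mem_basisFiltration_const]

lemma mem_kroneckerFiltration₁ {w : I} {x : U × U × V} :
    x ∈ kroneckerFiltration₁ b b' F G v w ↔ (¬ v (0, 4) ≤ w → x.1 + x.2.1 = 0) ∧
      (¬ v (1, 2) ≤ w → x.2.1 = 0) ∧ (¬ v (1, 3) ≤ w → x.2.2 + F x.1 + G x.2.1 = 0) := by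
  rw [basisFiltration_map, Submodule.mem_map_equiv]
  simp only [mem_basisFiltration_prod, mem_basisFiltration_const]
  rfl

lemma kroneckerFiltration₁_le :
    kroneckerFiltration₁ b b' F G v ≤ kroneckerFiltration₀ b b' v := by
  intro w ⟨x, y, z⟩ hx
  rw [mem_kroneckerFiltration₁] at hx
  rw [mem_kroneckerFiltration₀]
  have mono {p q} (hpq : p ≤ q) (hp : ¬ v p ≤ w) : ¬ v q ≤ w := fun hq ↦
    hp ((v.monotone hpq).trans hq)
  have hy (hw : ¬ v (1, 2) ≤ w) : y = 0 := hx.2.1 hw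
  have hx' (hw : ¬ v (0, 4) ≤ w) (hw' : ¬ v (1, 2) ≤ w) : x = 0 := by
    simpa [hy hw'] using hx.1 hw
  refine ⟨fun hw ↦ hx' (mono (by decide) hw) (mono (by decide) hw),
    fun hw ↦ hy (mono (by decide) hw), fun hw ↦ ?_⟩
  simpa [hx' (mono (by decide) hw) (mono (by decide) hw), hy (mono (by decide) hw)] using
    hx.2.2 (mono (by decide) hw)

lemma kroneckerFiltration₁_eq_bot : kroneckerFiltration₁ b b' F G v (v (0, 2)) = ⊥ := by
  refine (Submodule.eq_bot_iff _).2 fun ⟨x, y, z⟩ hx ↦ ?_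
  rw [mem_kroneckerFiltration₁] at hx
  obtain ⟨hxy, rfl, hz⟩ : x + y = 0 ∧ y = 0 ∧ z + F x + G y = 0 := by
    simpa [Prod.mk_le_mk] using hx
  obtain rfl : x = 0 := by simpa using hxy
  simpa using hz

lemma finrank_kroneckerFiltration₀ [Fintype κ] [Fintype κ'] :
    Module.finrank K (kroneckerFiltration₀ b b' v (v (0, 2))) =
      Fintype.card κ + Fintype.card κ' := by
  classical
  simp [finrank_basisFiltration, Fintype.card_subtype, Finset.card_filter, Prod.mk_le_mk,
    -Finset.sum_boole]

lemma finrank_filtrationHom_kronecker [Fintype κ] [Fintype κ']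
    (h : Fintype.card κ' = Fintype.card κ + 1) :
    Module.finrank K (filtrationHom (kroneckerFiltration₁ b b' F G v)
        (kroneckerFiltration₀ b b' v)) + 1 =
      Module.finrank K (filtrationHom (kroneckerFiltration₁ b b' F G v)
        (kroneckerFiltration₁ b b' F G v)) +
      Module.finrank K (filtrationHom (kroneckerFiltration₀ b b' v)
        (kroneckerFiltration₀ b b' v)) := by
  classical
  simp only [finrank_filtrationHom, Fintype.card_subtype, Finset.card_filter, Fin.isValue,
    Fintype.sum_sum_type, Sum.elim_inl, Sum.elim_inr, OrderEmbedding.le_iff_le, Prod.mk_le_mk,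
    le_refl, Fin.reduceLE, nonpos_iff_eq_zero, one_ne_zero, zero_le, and_self, and_true, and_false,
    ↓reduceIte, Fin.reduceEq, Finset.sum_const, Finset.card_univ, smul_eq_mul, mul_one, h]
  ring

lemma exists_eq_prodMap_of_mem_filtrationHom {f : U × U × V →ₗ[K] U × U × V}
    (h₁ : f ∈ filtrationHom (kroneckerFiltration₁ b b' F G v) (kroneckerFiltration₁ b b' F G v))
    (h₀ : f ∈ filtrationHom (kroneckerFiltration₀ b b' v) (kroneckerFiltration₀ b b' v)) :
    ∃ α β γ, f = LinearMap.prodMap α (LinearMap.prodMap β γ) := by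
  simp only [mem_filtrationHom, mem_kroneckerFiltration₁] at h₁
  simp only [mem_filtrationHom, mem_kroneckerFiltration₀] at h₀
  let α : U →ₗ[K] U := .fst K U _ ∘ₗ f ∘ₗ .inl K U _
  let β : U →ₗ[K] U := .fst K U V ∘ₗ .snd K U _ ∘ₗ f ∘ₗ .inr K U _ ∘ₗ .inl K U V
  let γ : V →ₗ[K] V := .snd K U V ∘ₗ .snd K U _ ∘ₗ f ∘ₗ .inr K U _ ∘ₗ .inr K U V
  have f_x (x) : f (x, 0, 0) = (α x, 0, 0) :=
    Prod.ext rfl (by simpa [Prod.ext_iff] using h₀ (v (0, 1)) (x, 0, 0))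
  have f_y (y) : f (0, y, 0) = (0, β y, 0) := by
    have : (f (0, y, 0)).1 = 0 ∧ (f (0, y, 0)).2.2 = 0 := by
      simpa using h₀ (v (1, 0)) (0, y, 0)
    exact Prod.ext this.1 (Prod.ext rfl this.2)
  have f_z (z) : f (0, 0, z) = (0, 0, γ z) := by
    have hy : (f (0, 0, z)).2.1 = 0 := by simpa using h₀ (v (0, 2)) (0, 0, z)
    have hx : (f (0, 0, z)).1 + (f (0, 0, z)).2.1 = 0 := by
      simpa using (h₁ (v (1, 3)) (0, 0, z) (by simp)).1
    exact Prod.ext (by simpa [hy] using hx) (Prod.ext hy rfl)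
  refine ⟨α, β, γ, LinearMap.ext fun ⟨x, y, z⟩ ↦ ?_⟩
  have : (x, y, z) = (x, 0, 0) + (0, y, 0) + (0, 0, z) := by simp
  rw [this, map_add, map_add, f_x, f_y, f_z]
  simp

lemma filtrationHom_kronecker_inf_le (hFG : IsKroneckerBrick F G) :
    filtrationHom (kroneckerFiltration₁ b b' F G v) (kroneckerFiltration₁ b b' F G v) ⊓
      filtrationHom (kroneckerFiltration₀ b b' v) (kroneckerFiltration₀ b b' v) ≤
      K ∙ LinearMap.id := by
  rintro f ⟨h₁, h₀⟩
  obtain ⟨α, β, γ, rfl⟩ := exists_eq_prodMap_of_mem_filtrationHom h₁ h₀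
  simp only [SetLike.mem_coe, mem_filtrationHom, mem_kroneckerFiltration₁] at h₁
  have hF (x) : γ (F x) = F (α x) := by
    have := h₁ (v (0, 4)) (-x, 0, F x) (by simp)
    exact add_neg_eq_zero.1 (by simpa using this)
  have hG (y) : α y = β y ∧ γ (G y) = G (β y) := by
    have := h₁ (v (1, 2)) (y, -y, G y - F y) (by simp)
    have : α y - β y = 0 ∧ γ (G y) - G (β y) = 0 := by
      simpa [hF, ← sub_eq_add_neg] using this
    exact ⟨sub_eq_zero.1 this.1, sub_eq_zero.1 this.2⟩
  obtain rfl : α = β := LinearMap.ext fun y ↦ (hG y).1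
  obtain ⟨c, rfl, rfl⟩ := hFG α γ (LinearMap.ext hF) (LinearMap.ext fun y ↦ (hG y).2)
  exact Submodule.mem_span_singleton.2 ⟨c, rfl⟩

end KroneckerFiltration

namespace CommLadder

theorem not_isTauTiltingFinite (K : Type) [Field K] {n : ℕ} (hn : 5 ≤ n) :
    ¬ IsTauTiltingFinite (CommLadder K n) := by
  have : NeZero n := ⟨by lia⟩
  let v : Fin 2 × Fin 5 ↪o Fin 2 × Fin n :=
    .ofMapLEIff (Prod.map id (Fin.castLE hn)) fun _ _ ↦ Iff.rfl
  let F (m : ℕ) := Function.ExtendByZero.linearMap K (Fin.castSucc (n := m))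
  let G (m : ℕ) := Function.ExtendByZero.linearMap K (Fin.succ (n := m))
  let S₀ (m : ℕ) := kroneckerFiltration₀ (Pi.basisFun K (Fin m)) (Pi.basisFun K (Fin (m + 1))) v
  let S₁ (m : ℕ) := kroneckerFiltration₁ (Pi.basisFun K (Fin m)) (Pi.basisFun K (Fin (m + 1)))
    (F m) (G m) v
  have le (m) : S₁ m ≤ S₀ m := kroneckerFiltration₁_le
  have brick (m) := filtrationHom_kronecker_inf_le (b := Pi.basisFun K (Fin m))
    (b' := Pi.basisFun K (Fin (m + 1))) (v := v) (isKroneckerBrick_extend_castSucc_succ K m)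
  refine not_isTauTiltingFiniteRing_of_bricks K (fun m ↦ filtrationQuotient (S₁ m) (S₀ m))
    (fun _ ↦ isFGMod_filtrationQuotient)
    (fun m ↦ hasProjectiveDimensionLE_filtrationQuotient (le m))
    (fun m ↦ subsingleton_ext_filtrationQuotient (le m) basisFiltration_top <|
      filtrationHom_le_sup_of_finrank_le (le m) (brick m)
        (finrank_filtrationHom_kronecker (by simp)).le)
    (fun m ↦ eq_zero_or_mono_of_filtrationQuotient (le m) basisFiltration_top (brick m))
    fun m ↦ lt_of_lt_of_le ?_ (finrank_le_filtrationQuotient kroneckerFiltration₁_eq_bot)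
  rw [finrank_kroneckerFiltration₀, Fintype.card_fin, Fintype.card_fin]
  lia

end CommLadder

theorem tau_tilting_finite_commutative_ladder_is_rep_finite_general (K : Type) [Field K] (n : ℕ)
    (ht : IsTauTiltingFinite (CommLadder K n)) : IsRepFinite (CommLadder K n) := by
  rcases le_or_gt n 4 with hn | hn
  · exact CommLadder.isRepFinite_of_le_four K hn
  · exact absurd ht (CommLadder.not_isTauTiltingFinite K hn)

/-- Corollary 4.6 of the paper.  Every τ-tilting-finite
commutative ladder over an algebraically closed field is
representation-finite. -/
theorem tau_tilting_finite_commutative_ladder_is_rep_finite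
    (K : Type) [Field K] [IsAlgClosed K] (n : ℕ) (hn : 1 ≤ n)
    (ht : IsTauTiltingFinite (CommLadder K n)) :
    IsRepFinite (CommLadder K n) :=
  tau_tilting_finite_commutative_ladder_is_rep_finite_general K n ht

end PaperSilting
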